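/- Let m ≥ 1 and q = 2^m. For each of the codes M_q^⊥, M_q, K_q and K_q^⊥, every zero-fixing automorphism is semilinear, and the groups Aut0(M_q^⊥), Aut0(M_q), Aut0(K_q) and Aut0(K_q^⊥) are pairwise isomorphic, each of order m·(q²−1)·(q²−q) (the order of the general semilinear group ΓL(2,q)). Moreover, the monomial automorphism groups AutM(M_q^⊥) and AutM(M_q) each have order (q²−1)·(q²−q) (the order of GL(2,q)). -/

import Mathlib

open Finset

/-- The dual of a code (as a set of words) with respect to the standard inner product. -/
def dualSet {F : Type*} [CommRing F] {ι : Type*} [Fintype ι] (C : Set (ι → F)) :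
    Set (ι → F) :=
  {y | ∀ x ∈ C, ∑ i, x i * y i = 0}

/-- Zero-fixing automorphisms of a code. -/
def aut0Set {F : Type*} [Zero F] {ι : Type*} (C : Set (ι → F)) :
    Set (Equiv.Perm (ι → F)) :=
  {e | (∃ (π : Equiv.Perm ι) (σ : ι → Equiv.Perm F), (∀ i, σ i 0 = 0) ∧
        ∀ v i, e v i = σ i (v (π⁻¹ i))) ∧ ⇑e '' C = C}

/-- Monomial automorphisms of a code. -/
def autMSet {F : Type*} [MonoidWithZero F] {ι : Type*} (C : Set (ι → F)) :
    Set (Equiv.Perm (ι → F)) :=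
  {e | (∃ (π : Equiv.Perm ι) (c : ι → F), (∀ i, c i ≠ 0) ∧
        ∀ v i, e v i = c i * v (π⁻¹ i)) ∧ ⇑e '' C = C}

/-- Semilinear automorphisms of a code over a field `F`. -/
def autSSet {F : Type*} [Field F] {ι : Type*} (C : Set (ι → F)) :
    Set (Equiv.Perm (ι → F)) :=
  {e | (∃ (π : Equiv.Perm ι) (τ : F ≃+* F) (c : ι → F), (∀ i, c i ≠ 0) ∧
        ∀ v i, e v i = c i * τ (v (π⁻¹ i))) ∧ ⇑e '' C = C}

/-- Two subsets of (possibly different) groups are isomorphic as groups: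
there is a bijection between them preserving multiplication. -/
def MulBijOn {X Y : Type*} [Mul X] [Mul Y] (A : Set X) (B : Set Y) : Prop :=
  ∃ f : X → Y, Set.BijOn f A B ∧ ∀ a ∈ A, ∀ b ∈ A, f (a * b) = f a * f b


/-!
Let `V` be the plane `F_{q²}` over `F_q` and `N` its norm form. A word `v` lies in `M_q` (resp.
`K_q`) exactly when the vectors `v j • z j` and the values `N (v j • z j)` both have sum zero, where
`z` runs through representatives of the points of the projective space of `V` over `F_q` (resp. over
`F_2`). The words of weight at most one are thus in bijection with `V`, and an additive zero-fixing
automorphism amounts to an additive permutation of the graph of `N`. A bijection `g` of `V` induces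
such a permutation if and only if it is semilinear: the alternating form polar to `N` makes `N` a
determinant up to a scalar, so every semilinear `g` changes `N` by a field automorphism, a scalar
and an additive map, and conversely preserving vanishing of the polar form forces semilinearity.

Automorphisms are automatically additive over `F_2`. For `M_q` with `q ≥ 4` additivity holds because
`M_q^⊥`, the evaluation code of a conic, is MDS of dimension `3 < q + 1` and `M_q` has dimension at
least two (and is MDS as well). Finally, additive automorphisms of a code and of its dual correspond
to each other through the transpose with respect to the trace form.
-/

section CoordinatePermutations

variable {R ι : Type*}

/-- The permutation of words that moves the entry in position `j` to position `π j` and then applies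
`σ i` in every position `i`. -/
def coordPerm (π : Equiv.Perm ι) (σ : ι → Equiv.Perm R) : Equiv.Perm (ι → R) :=
  (π.arrowCongr (Equiv.refl R)).trans (Equiv.piCongrRight σ)

theorem coordPerm_apply (π : Equiv.Perm ι) (σ : ι → Equiv.Perm R) (v : ι → R) (i : ι) :
    coordPerm π σ v i = σ i (v (π⁻¹ i)) :=
  rfl

theorem coordPerm_single [DecidableEq ι] [Zero R] (π : Equiv.Perm ι) {σ : ι → Equiv.Perm R}
    (hσ : ∀ i, σ i 0 = 0) (j : ι) (r : R) :
    coordPerm π σ (Pi.single j r) = Pi.single (π j) (σ (π j) r) := by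
  funext i
  rw [coordPerm_apply]
  rcases eq_or_ne i (π j) with rfl | hi
  · rw [Equiv.Perm.inv_def, Equiv.symm_apply_apply, Pi.single_eq_same, Pi.single_eq_same]
  · rw [Pi.single_eq_of_ne hi, Pi.single_eq_of_ne (fun h => hi (Equiv.Perm.inv_eq_iff_eq.1 h)), hσ]

theorem mem_aut0Set_iff [Zero R] {C : Set (ι → R)} {e : Equiv.Perm (ι → R)} :
    e ∈ aut0Set C ↔ (∃ (π : Equiv.Perm ι) (σ : ι → Equiv.Perm R),
      (∀ i, σ i 0 = 0) ∧ e = coordPerm π σ) ∧ e '' C = C :=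
  and_congr_left' <| exists₂_congr fun _ _ => and_congr_right' <|
    ⟨fun h => Equiv.ext fun v => funext (h v), fun h v i => by rw [h, coordPerm_apply]⟩

/-- The permutation `r ↦ a * τ r` of a field. -/
def semilinearPerm [Field R] (τ : R ≃+* R) {a : R} (ha : a ≠ 0) : Equiv.Perm R :=
  τ.toEquiv.trans (Equiv.mulLeft₀ a ha)

theorem semilinearPerm_apply [Field R] (τ : R ≃+* R) {a : R} (ha : a ≠ 0) (r : R) :
    semilinearPerm τ ha r = a * τ r :=
  rfl

theorem semilinearPerm_zero [Field R] (τ : R ≃+* R) {a : R} (ha : a ≠ 0) :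
    semilinearPerm τ ha 0 = 0 := by
  rw [semilinearPerm_apply, map_zero, mul_zero]

theorem mem_autSSet_iff [Field R] {C : Set (ι → R)} {e : Equiv.Perm (ι → R)} :
    e ∈ autSSet C ↔ (∃ (π : Equiv.Perm ι) (τ : R ≃+* R) (c : ι → R) (hc : ∀ i, c i ≠ 0),
      e = coordPerm π fun i => semilinearPerm τ (hc i)) ∧ e '' C = C := by
  refine and_congr_left' <| exists₃_congr fun π τ c => ⟨fun ⟨hc, h⟩ => ⟨hc, ?_⟩, ?_⟩
  · exact Equiv.ext fun v => funext (h v)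
  · rintro ⟨hc, rfl⟩
    exact ⟨hc, fun v i => rfl⟩

theorem autSSet_subset_aut0Set [Field R] (C : Set (ι → R)) : autSSet C ⊆ aut0Set C := by
  intro e he
  obtain ⟨⟨π, τ, c, hc, he⟩, hC⟩ := mem_autSSet_iff.1 he
  exact mem_aut0Set_iff.2 ⟨⟨π, _, fun i => semilinearPerm_zero τ (hc i), he⟩, hC⟩

theorem map_add_of_mem_autSSet [Field R] {C : Set (ι → R)} {e : Equiv.Perm (ι → R)}
    (he : e ∈ autSSet C) (v w : ι → R) : e (v + w) = e v + e w := by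
  obtain ⟨⟨π, τ, c, -, he⟩, -⟩ := he
  funext i
  simp only [he, Pi.add_apply, map_add, mul_add]

theorem mem_autMSet_iff_mem_autSSet [Field R] {C : Set (ι → R)} {e : Equiv.Perm (ι → R)} :
    e ∈ autMSet C ↔ e ∈ autSSet C ∧ ∀ (r : R) v, e (r • v) = r • e v := by
  constructor
  · rintro ⟨⟨π, c, hc, he⟩, hC⟩
    refine ⟨⟨⟨π, RingEquiv.refl R, c, hc, he⟩, hC⟩, fun r v => funext fun i => ?_⟩
    rw [Pi.smul_apply, he, he, Pi.smul_apply, smul_eq_mul, smul_eq_mul, mul_left_comm]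
  · rintro ⟨⟨⟨π, τ, c, hc, he⟩, hC⟩, hsmul⟩
    have hτ (i : ι) (r : R) : τ r = r := by
      have h : c i * τ r = r * c i := by
        simpa only [he, Pi.smul_apply, Pi.one_apply, smul_eq_mul, mul_one, map_one]
          using congrFun (hsmul r 1) i
      exact mul_left_cancel₀ (hc i) (h.trans (mul_comm r (c i)))
    exact ⟨⟨π, c, hc, fun v i => by rw [he, hτ i]⟩, hC⟩

end CoordinatePermutations

section Representations

variable {R ι G : Type*} [Group G]

/-- Every zero-fixing automorphism of `C` is semilinear, and `Aut0(C)` is isomorphic to `G`. -/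
def HasSemilinearAut0 (G : Type*) [Group G] [Field R] (C : Set (ι → R)) : Prop :=
  aut0Set C = autSSet C ∧
    ∃ φ : G →* Equiv.Perm (ι → R), Function.Injective φ ∧ Set.range φ = aut0Set C

namespace HasSemilinearAut0

variable [Field R] {C : Set (ι → R)}

theorem card_eq (h : HasSemilinearAut0 G C) : Nat.card (aut0Set C) = Nat.card G := by
  obtain ⟨-, φ, hφ, hrange⟩ := h
  rw [← hrange, Nat.card_congr (Equiv.ofInjective φ hφ)]

theorem mulBijOn {R' κ : Type*} [Field R'] {D : Set (κ → R')} (hC : HasSemilinearAut0 G C)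
    (hD : HasSemilinearAut0 G D) : MulBijOn (aut0Set C) (aut0Set D) := by
  obtain ⟨-, φ, hφ, hφC⟩ := hC
  obtain ⟨-, ψ, hψ, hψD⟩ := hD
  have hinv (g : G) : Function.invFun φ (φ g) = g := Function.leftInverse_invFun hφ g
  rw [← hφC, ← hψD]
  refine ⟨fun e => ψ (Function.invFun φ e), ⟨?_, ?_, ?_⟩, ?_⟩
  · rintro _ ⟨g, rfl⟩
    exact ⟨_, rfl⟩
  · rintro _ ⟨g, rfl⟩ _ ⟨g', rfl⟩ h
    simp only [hinv] at h
    rw [hψ h]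
  · rintro _ ⟨g, rfl⟩
    exact ⟨φ g, ⟨g, rfl⟩, congrArg ψ (hinv g)⟩
  · rintro _ ⟨g, rfl⟩ _ ⟨g', rfl⟩
    simp only [← map_mul, hinv]

end HasSemilinearAut0

theorem exists_monoidHom_of_rel {X : Type*} [Group X] {r : G → X → Prop} (hex : ∀ g, ∃ x, r g x)
    (hunique : ∀ {g x y}, r g x → r g y → x = y)
    (hmul : ∀ {g h x y}, r g x → r h y → r (g * h) (x * y)) : ∃ φ : G →* X, ∀ g, r g (φ g) := by
  choose φ hφ using hex
  exact ⟨MonoidHom.mk' φ fun g h => hunique (hφ (g * h)) (hmul (hφ g) (hφ h)), hφ⟩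

end Representations

section SemilinearGroup

variable (F V : Type*) [Field F] [AddCommGroup V] [Module F V]

/-- The general semilinear group `ΓL(V)`, as a group of permutations of `V`. -/
def semilinearGroup : Subgroup (Equiv.Perm V) where
  carrier := {g | (∀ x y, g (x + y) = g x + g y) ∧
    ∃ τ : F ≃+* F, ∀ (c : F) (x : V), g (c • x) = τ c • g x}
  mul_mem' := by
    rintro g h ⟨hg, τ, hτ⟩ ⟨hh, τ', hτ'⟩
    exact ⟨fun x y => by simp only [Equiv.Perm.mul_apply, hh, hg],
      τ'.trans τ, fun c x => by simp only [Equiv.Perm.mul_apply, hτ', hτ, RingEquiv.coe_trans,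
        Function.comp_apply]⟩
  one_mem' := ⟨fun _ _ => rfl, RingEquiv.refl F, fun _ _ => rfl⟩
  inv_mem' := by
    rintro g ⟨hg, τ, hτ⟩
    refine ⟨fun x y => g.injective ?_, τ.symm, fun c x => g.injective ?_⟩
    · simp only [hg, Equiv.Perm.inv_def, Equiv.apply_symm_apply]
    · simp only [hτ, Equiv.Perm.inv_def, Equiv.apply_symm_apply, RingEquiv.apply_symm_apply]

namespace semilinearGroup

variable {F V}

protected theorem map_add (g : semilinearGroup F V) (x y : V) : g.1 (x + y) = g.1 x + g.1 y :=
  g.2.1 x y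

protected theorem map_zero (g : semilinearGroup F V) : g.1 0 = 0 := by
  simpa only [add_zero, left_eq_add] using g.2.1 0 0

theorem ringEquiv_unique [Nontrivial V] {g : Equiv.Perm V} (hg : g 0 = 0) {τ τ' : F ≃+* F}
    (hτ : ∀ (c : F) (x : V), g (c • x) = τ c • g x)
    (hτ' : ∀ (c : F) (x : V), g (c • x) = τ' c • g x) : τ = τ' := by
  obtain ⟨x, hx⟩ := exists_ne (0 : V)
  have hgx : g x ≠ 0 := fun h => hx (g.injective (h.trans hg.symm))
  exact RingEquiv.ext fun c => smul_left_injective F hgx ((hτ c x).symm.trans (hτ' c x))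

/-- The field automorphism that accompanies a semilinear bijection. -/
noncomputable def toRingAut [Nontrivial V] : semilinearGroup F V →* RingAut F :=
  MonoidHom.mk' (fun g => g.2.2.choose) fun g h =>
    ringEquiv_unique (semilinearGroup.map_zero (g * h)) (g * h).2.2.choose_spec fun c x =>
      (congrArg g.1 (h.2.2.choose_spec c x)).trans (g.2.2.choose_spec _ _)

protected theorem map_smul [Nontrivial V] (g : semilinearGroup F V) (c : F) (x : V) :
    g.1 (c • x) = toRingAut g c • g.1 x :=
  g.2.2.choose_spec c x

theorem toRingAut_surjective [Nontrivial V] [Module.Finite F V] :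
    Function.Surjective (toRingAut : semilinearGroup F V →* RingAut F) := by
  intro τ
  let b := Module.finBasis F V
  let g : Equiv.Perm V :=
    b.equivFun.toEquiv.trans ((Equiv.piCongrRight fun _ => τ.toEquiv).trans b.equivFun.symm.toEquiv)
  have hg (x : V) : b.equivFun (g x) = fun i => τ (b.equivFun x i) :=
    b.equivFun.apply_symm_apply _
  have hadd (x y : V) : g (x + y) = g x + g y := b.equivFun.injective <| funext fun i => by
    simp only [hg, map_add, Pi.add_apply]
  have hsmul (c : F) (x : V) : g (c • x) = τ c • g x := b.equivFun.injective <| funext fun i => by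
    simp only [hg, map_smul, Pi.smul_apply, smul_eq_mul, map_mul]
  let g' : semilinearGroup F V := ⟨g, hadd, τ, hsmul⟩
  exact ⟨g', ringEquiv_unique (semilinearGroup.map_zero g') (semilinearGroup.map_smul g') hsmul⟩

theorem mem_ker_toRingAut [Nontrivial V] {g : semilinearGroup F V} :
    g ∈ toRingAut.ker ↔ ∀ (c : F) (x : V), g.1 (c • x) = c • g.1 x := by
  rw [MonoidHom.mem_ker]
  refine ⟨fun h c x => ?_, ringEquiv_unique (τ' := 1) (semilinearGroup.map_zero g)
    (semilinearGroup.map_smul g)⟩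
  rw [semilinearGroup.map_smul, h]
  rfl

/-- The linear elements of `ΓL(V)` form the group `GL(V)`. -/
noncomputable def kerToRingAutEquiv [Nontrivial V] :
    (toRingAut : semilinearGroup F V →* RingAut F).ker ≃ (V ≃ₗ[F] V) where
  toFun g := LinearEquiv.mk ⟨⟨g.1.1, semilinearGroup.map_add g.1⟩, mem_ker_toRingAut.1 g.2⟩
    g.1.1.symm g.1.1.left_inv g.1.1.right_inv
  invFun f := ⟨⟨f.toEquiv, f.map_add, 1, f.map_smul⟩, mem_ker_toRingAut.2 f.map_smul⟩
  left_inv _ := rfl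
  right_inv _ := rfl

theorem card_eq [Nontrivial V] [Module.Finite F V] :
    Nat.card (semilinearGroup F V) = Nat.card (F ≃+* F) * Nat.card (V ≃ₗ[F] V) := by
  rw [← Subgroup.card_mul_index (toRingAut : semilinearGroup F V →* RingAut F).ker,
    Subgroup.index_ker, MonoidHom.range_eq_top.2 toRingAut_surjective, Subgroup.card_top,
    Nat.card_congr kerToRingAutEquiv, mul_comm]

end semilinearGroup

variable {F V}

theorem natCard_linearEquiv [Fintype F] [Module.Finite F V] :
    Nat.card (V ≃ₗ[F] V) = ∏ i : Fin (Module.finrank F V),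
      (Fintype.card F ^ Module.finrank F V - Fintype.card F ^ (i : ℕ)) := by
  rw [← Matrix.card_GL_field]
  exact Nat.card_congr ((LinearMap.GeneralLinearGroup.generalLinearEquiv F V).symm.toEquiv.trans
    (Units.mapEquiv (LinearMap.toMatrixAlgEquiv (Module.finBasis F V)).toMulEquiv).toEquiv)

theorem natCard_linearEquiv_of_finrank_eq_two [Fintype F] (h : Module.finrank F V = 2) :
    Nat.card (V ≃ₗ[F] V) =
      (Fintype.card F ^ 2 - 1) * (Fintype.card F ^ 2 - Fintype.card F) := by
  have : Module.Finite F V := Module.finite_of_finrank_eq_succ h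
  rw [natCard_linearEquiv, h, Fin.prod_univ_two]
  simp only [Fin.val_zero, Fin.val_one, pow_zero, pow_one]

theorem natCard_ringEquiv {p m : ℕ} [Fact p.Prime] [Fintype F] [CharP F p]
    (h : Fintype.card F = p ^ m) : Nat.card (F ≃+* F) = m := by
  let := ZMod.algebra F p
  have hm : Module.finrank (ZMod p) F = m := by
    rw [Module.card_eq_pow_finrank (K := ZMod p) (V := F), ZMod.card] at h
    exact Nat.pow_right_injective (Fact.out : p.Prime).two_le h
  rw [← hm, ← IsGalois.card_aut_eq_finrank]
  exact Nat.card_congr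
    { toFun := fun τ => AlgEquiv.ofRingEquiv (f := τ) fun r => by
        rw [← RingEquiv.coe_toRingHom, ← RingHom.comp_apply]
        exact RingHom.congr_fun (Subsingleton.elim _ _) r
      invFun := fun f => f.toRingEquiv
      left_inv := fun _ => rfl
      right_inv := fun _ => rfl }

end SemilinearGroup

section AlternatingPlane

variable {F V : Type*} [Field F] [AddCommGroup V] [Module F V] {B : LinearMap.BilinForm F V}

theorem exists_bilin_apply_eq (hB : B.SeparatingLeft) {x : V} (hx : x ≠ 0) (b : F) :
    ∃ y, B x y = b :=
  LinearMap.surjective (fun h => hx (hB x fun y => by rw [h, LinearMap.zero_apply])) b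

theorem exists_smul_eq_of_bilin_apply_eq_zero (h2 : Module.finrank F V = 2) (halt : B.IsAlt)
    (hB : B.SeparatingLeft) {x y : V} (hx : x ≠ 0) (hxy : B x y = 0) : ∃ r : F, r • x = y := by
  have : Module.Finite F V := Module.finite_of_finrank_eq_succ h2
  have hBx : B x ≠ 0 := fun h => hx (hB x fun y => by rw [h, LinearMap.zero_apply])
  have hker : Module.finrank F (LinearMap.ker (B x)) = 1 := by
    have := Module.Dual.finrank_ker_add_one_of_ne_zero hBx
    omega
  let x' : LinearMap.ker (B x) := ⟨x, halt x⟩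
  obtain ⟨r, hr⟩ := (finrank_eq_one_iff_of_nonzero' x' (fun h => hx (congrArg Subtype.val h))).1
    hker ⟨y, hxy⟩
  exact ⟨r, congrArg Subtype.val hr⟩

theorem eq_smul_add_smul_of_bilin_apply_eq_one (h2 : Module.finrank F V = 2) (halt : B.IsAlt)
    (hB : B.SeparatingLeft) {x₀ y₀ : V} (h : B x₀ y₀ = 1) (x : V) :
    x = B x y₀ • x₀ + B x₀ x • y₀ := by
  have hx₀ : x₀ ≠ 0 := by
    rintro rfl
    rw [map_zero, LinearMap.zero_apply] at h
    exact zero_ne_one h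
  obtain ⟨r, hr⟩ := exists_smul_eq_of_bilin_apply_eq_zero h2 halt hB hx₀
    (y := x - B x₀ x • y₀) (by rw [map_sub, map_smul, h, smul_eq_mul, mul_one, sub_self])
  have hrx : B x y₀ = r := by
    rw [← sub_add_cancel x (B x₀ x • y₀), ← hr, map_add, map_smul, map_smul, LinearMap.add_apply,
      LinearMap.smul_apply, LinearMap.smul_apply, h, halt y₀, smul_zero, add_zero, smul_eq_mul,
      mul_one]
  rw [hrx, hr, sub_add_cancel]

theorem exists_bilin_map_eq_of_mem_semilinearGroup (h2 : Module.finrank F V = 2) (halt : B.IsAlt)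
    (hB : B.SeparatingLeft) {g : Equiv.Perm V} (hg : g ∈ semilinearGroup F V) :
    ∃ μ : F →+ F, ∀ x y, B (g x) (g y) = μ (B x y) := by
  obtain ⟨hadd, τ, hτ⟩ := hg
  have : Nontrivial V := Module.nontrivial_of_finrank_pos (R := F) (by omega)
  obtain ⟨x₀, hx₀⟩ := exists_ne (0 : V)
  obtain ⟨y₀, hy₀⟩ := exists_bilin_apply_eq hB hx₀ 1
  have hneg (x y : V) : B y x = -B x y := (LinearMap.IsAlt.neg halt x y).symm
  have hdec := eq_smul_add_smul_of_bilin_apply_eq_one h2 halt hB hy₀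
  refine ⟨(AddMonoidHom.mulLeft (B (g x₀) (g y₀))).comp τ.toAddMonoidHom, fun x y => ?_⟩
  have hxy : B x y = B x y₀ * B x₀ y - B x₀ x * B y y₀ := by
    conv_lhs => rw [hdec x]
    simp only [map_add, map_smul, LinearMap.add_apply, LinearMap.smul_apply, smul_eq_mul,
      hneg y y₀]
    ring
  conv_lhs => rw [hdec x, hdec y]
  simp only [hadd, hτ, map_add, map_smul, LinearMap.add_apply, LinearMap.smul_apply, smul_eq_mul,
    halt (g _), hneg (g x₀) (g y₀)]
  change _ = B (g x₀) (g y₀) * τ (B x y)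
  rw [hxy, map_sub, map_mul, map_mul]
  ring

section BilinMap

variable {g : Equiv.Perm V} {μ : F →+ F}

theorem map_add_of_bilin_map_eq (hB : B.SeparatingLeft) (hμ : ∀ x y, B (g x) (g y) = μ (B x y))
    (x y : V) : g (x + y) = g x + g y :=
  sub_eq_zero.1 <| hB _ fun z => by
    obtain ⟨z, rfl⟩ := g.surjective z
    simp only [map_sub, map_add, LinearMap.sub_apply, LinearMap.add_apply, hμ, sub_self]

theorem map_ne_zero_of_bilin_map_eq (hB : B.SeparatingLeft)
    (hμ : ∀ x y, B (g x) (g y) = μ (B x y)) {x : V} (hx : x ≠ 0) : g x ≠ 0 := by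
  have hg₀ : g 0 = 0 := by
    simpa only [add_zero, left_eq_add] using map_add_of_bilin_map_eq hB hμ 0 0
  exact fun h => hx (g.injective (h.trans hg₀.symm))

theorem exists_map_smul_eq_of_bilin_map_eq (h2 : Module.finrank F V = 2) (halt : B.IsAlt)
    (hB : B.SeparatingLeft) (hμ : ∀ x y, B (g x) (g y) = μ (B x y)) {x : V} (hx : x ≠ 0) (c : F) :
    ∃ t : F, g (c • x) = t • g x ∧ t * μ 1 = μ c := by
  obtain ⟨t, ht⟩ := exists_smul_eq_of_bilin_apply_eq_zero h2 halt hB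
    (map_ne_zero_of_bilin_map_eq hB hμ hx) (y := g (c • x))
    (by rw [hμ, map_smul, halt x, smul_zero, map_zero])
  obtain ⟨y, hy⟩ := exists_bilin_apply_eq hB hx 1
  refine ⟨t, ht.symm, ?_⟩
  rw [← hy, ← hμ, ← smul_eq_mul, ← LinearMap.smul_apply, ← map_smul, ht, hμ, map_smul,
    LinearMap.smul_apply, hy, smul_eq_mul, mul_one]

theorem map_one_ne_zero_of_bilin_map_eq (h2 : Module.finrank F V = 2) (halt : B.IsAlt)
    (hB : B.SeparatingLeft) (hμ : ∀ x y, B (g x) (g y) = μ (B x y)) : μ 1 ≠ 0 := by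
  intro h
  have : Nontrivial V := Module.nontrivial_of_finrank_pos (R := F) (by omega)
  obtain ⟨x, hx⟩ := exists_ne (0 : V)
  obtain ⟨z, hz⟩ := exists_bilin_apply_eq hB (map_ne_zero_of_bilin_map_eq hB hμ hx) 1
  obtain ⟨t, -, ht⟩ := exists_map_smul_eq_of_bilin_map_eq h2 halt hB hμ hx (B x (g.symm z))
  rw [← hμ, g.apply_symm_apply, hz, h, mul_zero] at ht
  exact zero_ne_one ht

theorem map_smul_of_bilin_map_eq (h2 : Module.finrank F V = 2) (halt : B.IsAlt)
    (hB : B.SeparatingLeft) (hμ : ∀ x y, B (g x) (g y) = μ (B x y)) (c : F) (x : V) :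
    g (c • x) = (μ c / μ 1) • g x := by
  rcases eq_or_ne x 0 with rfl | hx
  · have hg₀ : g 0 = 0 := by
      simpa only [add_zero, left_eq_add] using map_add_of_bilin_map_eq hB hμ 0 0
    rw [smul_zero, hg₀, smul_zero]
  · obtain ⟨t, ht, htc⟩ := exists_map_smul_eq_of_bilin_map_eq h2 halt hB hμ hx c
    rw [ht, ← htc, mul_div_cancel_right₀ _ (map_one_ne_zero_of_bilin_map_eq h2 halt hB hμ)]

theorem mem_semilinearGroup_of_bilin_map_eq (h2 : Module.finrank F V = 2) (halt : B.IsAlt)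
    (hB : B.SeparatingLeft) (hμ : ∀ x y, B (g x) (g y) = μ (B x y)) :
    g ∈ semilinearGroup F V := by
  have : Nontrivial V := Module.nontrivial_of_finrank_pos (R := F) (by omega)
  obtain ⟨x₀, hx₀⟩ := exists_ne (0 : V)
  have hsmul := map_smul_of_bilin_map_eq h2 halt hB hμ
  have hinj := smul_left_injective F (map_ne_zero_of_bilin_map_eq hB hμ hx₀)
  let τ : F →+* F :=
    { toFun := fun c => μ c / μ 1
      map_one' := div_self (map_one_ne_zero_of_bilin_map_eq h2 halt hB hμ)
      map_mul' := fun c d => hinj <| by simp only [mul_smul, ← hsmul]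
      map_zero' := by rw [map_zero, zero_div]
      map_add' := fun c d => by rw [map_add, add_div] }
  have hsurj : Function.Surjective τ := fun t => by
    have hy : μ (B x₀ (g.symm (t • g x₀))) / μ 1 = 0 := by
      rw [← hμ, g.apply_symm_apply, map_smul, halt, smul_zero, zero_div]
    obtain ⟨c, hc⟩ := exists_smul_eq_of_bilin_apply_eq_zero h2 halt hB hx₀
      ((map_eq_zero_iff τ τ.injective).1 hy)
    exact ⟨c, hinj ((hsmul c x₀).symm.trans (g.eq_symm_apply.1 hc))⟩
  exact ⟨map_add_of_bilin_map_eq hB hμ, RingEquiv.ofBijective τ ⟨τ.injective, hsurj⟩, hsmul⟩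

theorem mem_semilinearGroup_iff_exists_bilin_map_eq (h2 : Module.finrank F V = 2)
    (halt : B.IsAlt) (hB : B.SeparatingLeft) :
    g ∈ semilinearGroup F V ↔ ∃ μ : F →+ F, ∀ x y, B (g x) (g y) = μ (B x y) :=
  ⟨exists_bilin_map_eq_of_mem_semilinearGroup h2 halt hB,
    fun ⟨_, hμ⟩ => mem_semilinearGroup_of_bilin_map_eq h2 halt hB hμ⟩

end BilinMap

end AlternatingPlane

section QuadraticForm

variable {F V : Type*} [Field F] [AddCommGroup V] [Module F V] {Q : QuadraticForm F V}

theorem polarBilin_isAlt [CharP F 2] (Q : QuadraticForm F V) : Q.polarBilin.IsAlt := fun x => by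
  rw [QuadraticMap.polarBilin_apply_apply, QuadraticMap.polar_self, CharTwo.two_nsmul]

theorem polar_prodMk_zero (Q : QuadraticForm F V) (x y : V) :
    (QuadraticMap.polar Q x y, (0 : V)) = (Q (x + y), x + y) - (Q x, x) - (Q y, y) := by
  rw [Prod.mk_sub_mk, Prod.mk_sub_mk, add_sub_cancel_left, sub_self]
  rfl

theorem exists_polar_map_eq_of_exists_graph_map_eq (hQ : Q.polarBilin.SeparatingLeft)
    {g : Equiv.Perm V} {A : F × V →+ F × V} (hA : ∀ x, A (Q x, x) = (Q (g x), g x)) (x y : V) :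
    QuadraticMap.polar Q (g x) (g y) = (A (QuadraticMap.polar Q x y, 0)).1 := by
  have hg₀ : g 0 = 0 := by
    have := hA 0
    rw [map_zero, ← Prod.zero_eq_mk, map_zero] at this
    exact (congrArg Prod.snd this).symm
  have hpolar (x y : V) : A (QuadraticMap.polar Q x y, 0) =
      (Q (g (x + y)) - Q (g x) - Q (g y), g (x + y) - g x - g y) := by
    rw [polar_prodMk_zero, map_sub, map_sub, hA, hA, hA, Prod.mk_sub_mk, Prod.mk_sub_mk]
  -- A nonzero value `w` of the second component at `b` would give `g (x + y) = g y` for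
  -- `g x = -w` and `polar Q x y = b`.
  have hsnd (b : F) : (A (b, 0)).2 = 0 := by
    by_contra hw
    let x := g.symm (-(A (b, 0)).2)
    have hgx : g x = -(A (b, 0)).2 := g.apply_symm_apply _
    have hx₀ : x ≠ 0 := fun h => hw (neg_eq_zero.1 (hgx.symm.trans (by rw [h, hg₀])))
    obtain ⟨y, hy⟩ := exists_bilin_apply_eq hQ hx₀ b
    have h := congrArg Prod.snd (hpolar x y)
    rw [← QuadraticMap.polarBilin_apply_apply, hy, hgx, sub_neg_eq_add, add_sub_right_comm,
      right_eq_add, sub_eq_zero] at h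
    exact hx₀ (by simpa only [add_eq_right] using g.injective h)
  have hadd : g (x + y) = g x + g y := by
    have h := congrArg Prod.snd (hpolar x y)
    rwa [hsnd, eq_comm, sub_eq_zero, sub_eq_iff_eq_add'] at h
  rw [hpolar, hadd]
  rfl

theorem exists_graph_map_eq_iff_exists_polar_map_eq (hQ : Q.polarBilin.SeparatingLeft)
    {g : Equiv.Perm V} :
    (∃ A : F × V →+ F × V, ∀ x, A (Q x, x) = (Q (g x), g x)) ↔
      ∃ μ : F →+ F, ∀ x y, Q.polarBilin (g x) (g y) = μ (Q.polarBilin x y) := by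
  refine ⟨fun ⟨A, hA⟩ => ⟨(AddMonoidHom.fst F V).comp (A.comp (AddMonoidHom.inl F V)),
    exists_polar_map_eq_of_exists_graph_map_eq hQ hA⟩, fun ⟨μ, hμ⟩ => ?_⟩
  have hadd := map_add_of_bilin_map_eq hQ hμ
  let κ : V →+ F := AddMonoidHom.mk' (fun x => Q (g x) - μ (Q x)) fun x y => by
    have h := hμ x y
    simp only [QuadraticMap.polarBilin_apply_apply, QuadraticMap.polar, ← hadd, map_sub] at h
    linear_combination h
  refine ⟨(μ.coprod κ).prod ((AddMonoidHom.mk' g hadd).comp (AddMonoidHom.snd F V)), fun x => ?_⟩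
  exact Prod.ext (add_sub_cancel (μ (Q x)) (Q (g x))) rfl

theorem mem_semilinearGroup_iff_exists_graph_map_eq [CharP F 2] (h2 : Module.finrank F V = 2)
    (hQ : Q.polarBilin.SeparatingLeft) {g : Equiv.Perm V} :
    g ∈ semilinearGroup F V ↔ ∃ A : F × V →+ F × V, ∀ x, A (Q x, x) = (Q (g x), g x) :=
  (mem_semilinearGroup_iff_exists_bilin_map_eq h2 (polarBilin_isAlt Q) hQ).trans
    (exists_graph_map_eq_iff_exists_polar_map_eq hQ).symm

end QuadraticForm

section LineFamily

variable {R ι V : Type*} [Field R] [AddCommGroup V] [Module R V]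

/-- A family of representatives of the points of the projective space `ℙ(V)` over `R`. -/
structure IsLineFamily (R : Type*) {ι V : Type*} [Field R] [AddCommGroup V] [Module R V]
    (z : ι → V) : Prop where
  ne_zero : ∀ j, z j ≠ 0
  exists_smul_eq : ∀ x, ∃ (j : ι) (r : R), r • z j = x
  eq_of_smul_eq : ∀ {i j : ι} {r s : R}, r ≠ 0 → r • z i = s • z j → i = j

namespace IsLineFamily

variable {z : ι → V} [DecidableEq ι]

/-- The word of weight at most one attached to a vector `x = r • z j`: it has the entry `r` in
position `j`. -/
noncomputable def word (hz : IsLineFamily R z) (x : V) : ι → R :=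
  Pi.single (hz.exists_smul_eq x).choose (hz.exists_smul_eq x).choose_spec.choose

theorem word_smul (hz : IsLineFamily R z) (r : R) (j : ι) : hz.word (r • z j) = Pi.single j r := by
  have h := (hz.exists_smul_eq (r • z j)).choose_spec.choose_spec
  unfold word
  revert h
  generalize (hz.exists_smul_eq (r • z j)).choose_spec.choose = r'
  generalize (hz.exists_smul_eq (r • z j)).choose = j'
  intro h
  rcases eq_or_ne r' 0 with rfl | hr'
  · rw [zero_smul, eq_comm, smul_eq_zero_iff_left (hz.ne_zero j)] at h
    rw [h, Pi.single_zero, Pi.single_zero]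
  · obtain rfl := hz.eq_of_smul_eq hr' h
    rw [smul_left_injective R (hz.ne_zero j') h]

theorem smul_word (hz : IsLineFamily R z) (r : R) (x : V) : hz.word (r • x) = r • hz.word x := by
  obtain ⟨j, t, rfl⟩ := hz.exists_smul_eq x
  rw [smul_smul, hz.word_smul, hz.word_smul, ← Pi.single_smul, smul_eq_mul]

theorem addMonoidHom_ext [Finite ι] (hz : IsLineFamily R z) {A : Type*} [AddCommGroup A]
    {f f' : (ι → R) →+ A} (h : ∀ x, f (hz.word x) = f' (hz.word x)) : f = f' :=
  AddMonoidHom.functions_ext _ _ _ fun j r => by rw [← hz.word_smul, h]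

theorem linearCombination_word [Fintype ι] (hz : IsLineFamily R z) (x : V) :
    Fintype.linearCombination R z (hz.word x) = x := by
  obtain ⟨j, r, rfl⟩ := hz.exists_smul_eq x
  rw [hz.word_smul, Fintype.linearCombination_apply_single]

theorem word_injective [Finite ι] (hz : IsLineFamily R z) : Function.Injective hz.word :=
  have := Fintype.ofFinite ι
  Function.LeftInverse.injective hz.linearCombination_word

/-- `e` extends the permutation `g` of the vectors, viewed as a permutation of the words of weight
at most one, to an additive permutation of all words. -/
structure IsLift (hz : IsLineFamily R z) (g : Equiv.Perm V) (e : Equiv.Perm (ι → R)) :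
    Prop where
  map_add : ∀ v w, e (v + w) = e v + e w
  map_word : ∀ x, e (hz.word x) = hz.word (g x)

namespace IsLift

variable {hz : IsLineFamily R z} {g g' : Equiv.Perm V} {e e' : Equiv.Perm (ι → R)}

theorem mul (h : hz.IsLift g e) (h' : hz.IsLift g' e') : hz.IsLift (g * g') (e * e') :=
  ⟨fun v w => by simp only [Equiv.Perm.mul_apply, h'.map_add, h.map_add],
    fun x => by simp only [Equiv.Perm.mul_apply, h'.map_word, h.map_word]⟩

theorem inv (h : hz.IsLift g e) : hz.IsLift g⁻¹ e⁻¹ where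
  map_add v w := e.injective <| by
    simp only [h.map_add, Equiv.Perm.inv_def, Equiv.apply_symm_apply]
  map_word x := e.injective <| by
    simp only [h.map_word, Equiv.Perm.inv_def, Equiv.apply_symm_apply]

theorem unique [Finite ι] (h : hz.IsLift g e) (h' : hz.IsLift g e') : e = e' :=
  Equiv.ext fun v => DFunLike.congr_fun (hz.addMonoidHom_ext
    (f := AddMonoidHom.mk' e h.map_add) (f' := AddMonoidHom.mk' e' h'.map_add)
    fun x => (h.map_word x).trans (h'.map_word x).symm) v

theorem perm_unique [Finite ι] (h : hz.IsLift g e) (h' : hz.IsLift g' e) : g = g' :=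
  Equiv.ext fun x => hz.word_injective ((h.map_word x).symm.trans (h'.map_word x))

end IsLift

theorem exists_isLift_of_mem_aut0Set [Finite ι] (hz : IsLineFamily R z) {C : Set (ι → R)}
    {e : Equiv.Perm (ι → R)} (he : e ∈ aut0Set C) (hadd : ∀ v w, e (v + w) = e v + e w) :
    ∃ g, hz.IsLift g e := by
  obtain ⟨⟨π, σ, hσ, rfl⟩, -⟩ := mem_aut0Set_iff.1 he
  have hmem (v : ι → R) : v ∈ Set.range hz.word ↔ ∃ j r, v = Pi.single j r := by
    refine ⟨?_, fun ⟨j, r, hv⟩ => ⟨r • z j, (hz.word_smul r j).trans hv.symm⟩⟩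
    rintro ⟨x, rfl⟩
    obtain ⟨j, r, rfl⟩ := hz.exists_smul_eq x
    exact ⟨j, r, hz.word_smul r j⟩
  have hrange (v : ι → R) : coordPerm π σ v ∈ Set.range hz.word ↔ v ∈ Set.range hz.word := by
    rw [hmem, hmem]
    constructor
    · rintro ⟨j, r, hv⟩
      refine ⟨π⁻¹ j, (σ j).symm r, (coordPerm π σ).injective ?_⟩
      rw [hv, coordPerm_single π hσ, Equiv.Perm.inv_def, Equiv.apply_symm_apply,
        Equiv.apply_symm_apply]
    · rintro ⟨j, r, rfl⟩
      exact ⟨_, _, coordPerm_single π hσ j r⟩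
  let E := Equiv.ofInjective hz.word hz.word_injective
  refine ⟨E.symm.permCongr ((coordPerm π σ).subtypePerm hrange), hadd, fun x => ?_⟩
  exact (congrArg Subtype.val
    (E.apply_symm_apply ((coordPerm π σ).subtypePerm hrange (E x)))).symm

end IsLineFamily

end LineFamily

section SemilinearLift

variable {R F ι V : Type*} [Field R] [Field F] [Algebra R F] [AddCommGroup V] [Module R V]
  [Module F V] [IsScalarTower R F V] {z : ι → V} [Finite ι]

theorem IsLineFamily.exists_perm_map_smul_eq (hz : IsLineFamily R z)
    (hR : ∀ τ : F ≃+* F, ∃ τ' : R ≃+* R, ∀ r, τ (algebraMap R F r) = algebraMap R F (τ' r))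
    {g : Equiv.Perm V} (hg : g ∈ semilinearGroup F V) :
    ∃ (π : Equiv.Perm ι) (τ : R ≃+* R) (c : ι → R), (∀ i, c i ≠ 0) ∧
      ∀ j r, g (r • z j) = (c (π j) * τ r) • z (π j) := by
  obtain ⟨τ, hτ⟩ := hg.2
  obtain ⟨τ', hτ'⟩ := hR τ
  have hsmul (r : R) (x : V) : g (r • x) = τ' r • g x := by
    rw [← algebraMap_smul F r x, hτ, hτ', algebraMap_smul]
  choose π t hπ using fun j => hz.exists_smul_eq (g (z j))
  have ht (j : ι) : t j ≠ 0 := fun h => hz.ne_zero j <| g.injective <| by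
    rw [← hπ, h, zero_smul, semilinearGroup.map_zero ⟨g, hg⟩]
  have hinj : Function.Injective π := fun i j hij => by
    refine hz.eq_of_smul_eq (r := 1) (s := τ'.symm (t i / t j)) one_ne_zero (g.injective ?_)
    rw [hsmul, hsmul, map_one, one_smul, τ'.apply_symm_apply, ← hπ i, ← hπ j, hij, smul_smul,
      div_mul_cancel₀ _ (ht j)]
  let π' := Equiv.ofBijective π (Finite.injective_iff_bijective.1 hinj)
  refine ⟨π', τ', fun i => t (π'.symm i), fun i => ht _, fun j r => ?_⟩
  simp only [hsmul, ← hπ, smul_smul, Equiv.symm_apply_apply, mul_comm (t j)]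
  rfl

theorem IsLineFamily.exists_isLift_of_mem_semilinearGroup [DecidableEq ι] (hz : IsLineFamily R z)
    (hR : ∀ τ : F ≃+* F, ∃ τ' : R ≃+* R, ∀ r, τ (algebraMap R F r) = algebraMap R F (τ' r))
    {g : Equiv.Perm V} (hg : g ∈ semilinearGroup F V) :
    ∃ e, hz.IsLift g e ∧ e ∈ autSSet Set.univ := by
  obtain ⟨π, τ, c, hc, hπ⟩ := hz.exists_perm_map_smul_eq hR hg
  let e := coordPerm π fun i => semilinearPerm τ (hc i)
  have he : e ∈ autSSet Set.univ :=
    mem_autSSet_iff.2 ⟨⟨π, τ, c, hc, rfl⟩, Set.image_univ_of_surjective e.surjective⟩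
  refine ⟨e, ⟨map_add_of_mem_autSSet he, fun x => ?_⟩, he⟩
  obtain ⟨j, r, rfl⟩ := hz.exists_smul_eq x
  rw [hz.word_smul, hπ, hz.word_smul, coordPerm_single π fun i => semilinearPerm_zero τ (hc i)]
  rfl

end SemilinearLift

section GraphCode

variable (R : Type*) {F ι V : Type*} [Field R] [Field F] [CharP F 2] [Algebra R F]
  [AddCommGroup V] [Module R V] [Module F V] [IsScalarTower R F V] [Fintype ι]

theorem quadraticForm_add_smul (Q : QuadraticForm F V) (r s : R) (x : V) :
    Q ((r + s) • x) = Q (r • x) + Q (s • x) := by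
  simp only [Q.map_smul_of_tower, Algebra.smul_def, map_mul, map_add, CharTwo.add_mul_self]
  rw [add_mul]

/-- The map sending a word `v` to the sum of the points `(Q (v j • z j), v j • z j)` of the graph of
the quadratic form `Q`. It is additive because squaring is. -/
def graphSum (Q : QuadraticForm F V) (z : ι → V) : (ι → R) →+ F × V :=
  AddMonoidHom.mk' (fun v => (∑ j, Q (v j • z j), ∑ j, v j • z j)) fun v w => by
    simp only [Pi.add_apply, quadraticForm_add_smul, Finset.sum_add_distrib, Prod.mk_add_mk]
    rw [← Finset.sum_add_distrib (f := fun j => v j • z j)]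
    simp only [add_smul]

/-- The code of the `R`-linear relations that lift from the vectors `z j` to the points
`(Q (v j • z j), v j • z j)` of the graph of `Q`. The codes `M_q` and `K_q` are of this form, for
the norm of `F_{q²}` over `F_q`. -/
def graphCode (Q : QuadraticForm F V) (z : ι → V) : Submodule R (ι → R) where
  carrier := {v | graphSum R Q z v = 0}
  zero_mem' := map_zero (graphSum R Q z)
  add_mem' {v w} hv hw := (map_add (graphSum R Q z) v w).trans (by rw [hv, hw, add_zero])
  smul_mem' r v hv := by
    obtain ⟨hQ, hz⟩ := Prod.mk_eq_zero.1 hv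
    refine Prod.mk_eq_zero.2 ⟨?_, ?_⟩
    · simp only [Pi.smul_apply, smul_eq_mul, mul_smul, Q.map_smul_of_tower r, ← Finset.smul_sum,
        hQ, smul_zero]
    · simp only [Pi.smul_apply, smul_eq_mul, mul_smul, ← Finset.smul_sum, hz, smul_zero]

variable {R} {Q : QuadraticForm F V} {z : ι → V}

theorem mem_graphCode {v : ι → R} : v ∈ graphCode R Q z ↔ graphSum R Q z v = 0 :=
  Iff.rfl

theorem graphSum_word [DecidableEq ι] (hz : IsLineFamily R z) (x : V) :
    graphSum R Q z (hz.word x) = (Q x, x) := by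
  obtain ⟨j, r, rfl⟩ := hz.exists_smul_eq x
  have hzero (i : ι) (hi : i ≠ j) : (Pi.single j r : ι → R) i • z i = 0 := by
    rw [Pi.single_eq_of_ne hi, zero_smul]
  rw [hz.word_smul]
  refine Prod.ext ((Finset.sum_eq_single j (fun i _ hi => ?_) ?_).trans ?_)
    ((Finset.sum_eq_single j (fun i _ hi => hzero i hi) ?_).trans ?_)
  · rw [hzero i hi, map_zero]
  · exact fun h => absurd (Finset.mem_univ j) h
  · rw [Pi.single_eq_same]
  · exact fun h => absurd (Finset.mem_univ j) h
  · rw [Pi.single_eq_same]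

theorem graphSum_surjective [Nontrivial V] (hQ : Q.polarBilin.SeparatingLeft)
    (hz : IsLineFamily R z) : Function.Surjective (graphSum R Q z) := by
  classical
  rw [← AddMonoidHom.range_eq_top, eq_top_iff]
  have hgraph (x : V) : (Q x, x) ∈ (graphSum R Q z).range := ⟨_, graphSum_word hz x⟩
  rintro ⟨b, x⟩ -
  obtain ⟨x₀, hx₀⟩ := exists_ne (0 : V)
  obtain ⟨y₀, hy₀⟩ := exists_bilin_apply_eq hQ hx₀ (b - Q x)
  have hb : ((b - Q x, 0) : F × V) ∈ (graphSum R Q z).range := by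
    rw [← hy₀, QuadraticMap.polarBilin_apply_apply, polar_prodMk_zero]
    exact sub_mem (sub_mem (hgraph _) (hgraph _)) (hgraph _)
  simpa only [Prod.mk_add_mk, sub_add_cancel, zero_add] using add_mem hb (hgraph x)

theorem IsLineFamily.IsLift.mem_semilinearGroup_of_image_eq [DecidableEq ι]
    {hz : IsLineFamily R z} {g : Equiv.Perm V} {e : Equiv.Perm (ι → R)} (h : hz.IsLift g e)
    (h2 : Module.finrank F V = 2) (hQ : Q.polarBilin.SeparatingLeft)
    (hC : e '' graphCode R Q z = graphCode R Q z) : g ∈ semilinearGroup F V := by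
  have : Nontrivial V := Module.nontrivial_of_finrank_pos (R := F) (by omega)
  have hsurj := graphSum_surjective hQ hz
  let L := (graphSum R Q z).comp (AddMonoidHom.mk' e h.map_add)
  have hker : (graphSum R Q z).ker ≤ L.ker := fun v hv =>
    hC.subset (Set.mem_image_of_mem e (mem_graphCode.2 hv))
  refine (mem_semilinearGroup_iff_exists_graph_map_eq h2 hQ).2
    ⟨(graphSum R Q z).liftOfSurjective hsurj ⟨L, hker⟩, fun x => ?_⟩
  rw [← graphSum_word hz x, AddMonoidHom.liftOfRightInverse_comp_apply]
  exact (congrArg (graphSum R Q z) (h.map_word x)).trans (graphSum_word hz (g x))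

theorem IsLineFamily.IsLift.mapsTo_graphCode [DecidableEq ι]
    {hz : IsLineFamily R z} {g : Equiv.Perm V} {e : Equiv.Perm (ι → R)} (h : hz.IsLift g e)
    (h2 : Module.finrank F V = 2) (hQ : Q.polarBilin.SeparatingLeft)
    (hg : g ∈ semilinearGroup F V) : Set.MapsTo e (graphCode R Q z) (graphCode R Q z) := by
  obtain ⟨A, hA⟩ := (mem_semilinearGroup_iff_exists_graph_map_eq h2 hQ).1 hg
  have hAe : A.comp (graphSum R Q z) = (graphSum R Q z).comp (AddMonoidHom.mk' e h.map_add) :=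
    hz.addMonoidHom_ext fun x => by
      simp only [AddMonoidHom.comp_apply, AddMonoidHom.mk'_apply, h.map_word, graphSum_word, hA]
  intro v hv
  rw [SetLike.mem_coe, mem_graphCode] at hv ⊢
  rw [← AddMonoidHom.mk'_apply e h.map_add, ← AddMonoidHom.comp_apply, ← hAe,
    AddMonoidHom.comp_apply, hv, map_zero]

theorem IsLineFamily.IsLift.image_graphCode_eq_iff [DecidableEq ι]
    {hz : IsLineFamily R z} {g : Equiv.Perm V} {e : Equiv.Perm (ι → R)} (h : hz.IsLift g e)
    (h2 : Module.finrank F V = 2) (hQ : Q.polarBilin.SeparatingLeft) :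
    e '' graphCode R Q z = graphCode R Q z ↔ g ∈ semilinearGroup F V := by
  refine ⟨h.mem_semilinearGroup_of_image_eq h2 hQ, fun hg => ?_⟩
  refine (h.mapsTo_graphCode h2 hQ hg).image_subset.antisymm fun v hv => ?_
  exact ⟨e⁻¹ v, h.inv.mapsTo_graphCode h2 hQ (inv_mem hg) hv, e.apply_symm_apply v⟩

theorem exists_lift_monoidHom_range_eq_autSSet [DecidableEq ι] (hz : IsLineFamily R z)
    (h2 : Module.finrank F V = 2) (hQ : Q.polarBilin.SeparatingLeft)
    (hR : ∀ τ : F ≃+* F, ∃ τ' : R ≃+* R, ∀ r, τ (algebraMap R F r) = algebraMap R F (τ' r)) :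
    ∃ φ : semilinearGroup F V →* Equiv.Perm (ι → R), (∀ g, hz.IsLift g.1 (φ g)) ∧
      Function.Injective φ ∧ Set.range φ = autSSet (graphCode R Q z : Set (ι → R)) := by
  have hmem {g : Equiv.Perm V} {e : Equiv.Perm (ι → R)} (hg : g ∈ semilinearGroup F V)
      (h : hz.IsLift g e) (he : e ∈ autSSet Set.univ) : e ∈ autSSet (graphCode R Q z : Set _) :=
    ⟨he.1, (h.image_graphCode_eq_iff h2 hQ).2 hg⟩
  obtain ⟨φ, hφ⟩ := exists_monoidHom_of_rel
    (r := fun (g : semilinearGroup F V) e => hz.IsLift g.1 e)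
    (fun g => (hz.exists_isLift_of_mem_semilinearGroup hR g.2).imp fun _ h => h.1)
    IsLineFamily.IsLift.unique IsLineFamily.IsLift.mul
  refine ⟨φ, hφ, fun g g' h => Subtype.ext ((hφ g).perm_unique (h ▸ hφ g')), ?_⟩
  refine Set.Subset.antisymm ?_ fun e he => ?_
  · rintro _ ⟨g, rfl⟩
    obtain ⟨e, hge, he⟩ := hz.exists_isLift_of_mem_semilinearGroup hR g.2
    rw [(hφ g).unique hge]
    exact hmem g.2 hge he
  · obtain ⟨g, hge⟩ :=
      hz.exists_isLift_of_mem_aut0Set (autSSet_subset_aut0Set _ he) (map_add_of_mem_autSSet he)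
    exact ⟨⟨g, (hge.image_graphCode_eq_iff h2 hQ).1 he.2⟩, (hφ _).unique hge⟩

theorem hasSemilinearAut0_graphCode (hz : IsLineFamily R z)
    (h2 : Module.finrank F V = 2) (hQ : Q.polarBilin.SeparatingLeft)
    (hR : ∀ τ : F ≃+* F, ∃ τ' : R ≃+* R, ∀ r, τ (algebraMap R F r) = algebraMap R F (τ' r))
    (hadd : ∀ e ∈ aut0Set (graphCode R Q z : Set (ι → R)), ∀ v w, e (v + w) = e v + e w) :
    HasSemilinearAut0 (semilinearGroup F V) (graphCode R Q z : Set (ι → R)) := by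
  classical
  obtain ⟨φ, hφ, hinj, hrange⟩ := exists_lift_monoidHom_range_eq_autSSet hz h2 hQ hR
  have hsub : aut0Set (graphCode R Q z : Set (ι → R)) ⊆ autSSet (graphCode R Q z : Set _) := by
    intro e he
    obtain ⟨g, hge⟩ := hz.exists_isLift_of_mem_aut0Set he (hadd e he)
    rw [← hrange]
    exact ⟨⟨g, (hge.image_graphCode_eq_iff h2 hQ).1 he.2⟩, (hφ _).unique hge⟩
  have heq := hsub.antisymm (autSSet_subset_aut0Set _)
  exact ⟨heq, φ, hinj, hrange.trans heq.symm⟩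

end GraphCode

section LinearLift

variable {F ι V : Type*} [Field F] [AddCommGroup V] [Module F V] {z : ι → V}

theorem IsLineFamily.IsLift.map_smul_iff [Finite ι] [DecidableEq ι] {hz : IsLineFamily F z}
    {g : Equiv.Perm V} {e : Equiv.Perm (ι → F)} (h : hz.IsLift g e) :
    (∀ (r : F) v, e (r • v) = r • e v) ↔ ∀ (r : F) x, g (r • x) = r • g x := by
  refine ⟨fun he r x => hz.word_injective ?_, fun hg r v => ?_⟩
  · rw [← h.map_word, hz.smul_word, he, h.map_word, hz.smul_word]
  · let f := AddMonoidHom.mk' e h.map_add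
    exact DFunLike.congr_fun (hz.addMonoidHom_ext
      (f := f.comp (DistribSMul.toAddMonoidHom (ι → F) r))
      (f' := (DistribSMul.toAddMonoidHom (ι → F) r).comp f) fun x => by
        change e (r • hz.word x) = r • e (hz.word x)
        rw [← hz.smul_word, h.map_word, hg, h.map_word, hz.smul_word]) v

theorem card_autMSet_graphCode [Fintype ι] [CharP F 2] {Q : QuadraticForm F V}
    (hz : IsLineFamily F z) (h2 : Module.finrank F V = 2) (hQ : Q.polarBilin.SeparatingLeft) :
    Nat.card (autMSet (graphCode F Q z : Set (ι → F))) = Nat.card (V ≃ₗ[F] V) := by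
  classical
  have : Nontrivial V := Module.nontrivial_of_finrank_pos (R := F) (by omega)
  obtain ⟨φ, hφ, hinj, hrange⟩ :=
    exists_lift_monoidHom_range_eq_autSSet hz h2 hQ fun τ => ⟨τ, fun _ => rfl⟩
  have hker (g : semilinearGroup F V) :
      g ∈ semilinearGroup.toRingAut.ker ↔ ∀ (r : F) v, φ g (r • v) = r • φ g v := by
    rw [(hφ g).map_smul_iff, semilinearGroup.mem_ker_toRingAut]
  have himage : autMSet (graphCode F Q z : Set (ι → F)) =
      φ '' (semilinearGroup.toRingAut : semilinearGroup F V →* RingAut F).ker := by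
    ext e
    rw [mem_autMSet_iff_mem_autSSet, ← hrange]
    constructor
    · rintro ⟨⟨g, rfl⟩, h⟩
      exact ⟨g, (hker g).2 h, rfl⟩
    · rintro ⟨g, hg, rfl⟩
      exact ⟨⟨g, rfl⟩, (hker g).1 hg⟩
  rw [himage, Nat.card_image_of_injective hinj]
  exact Nat.card_congr semilinearGroup.kerToRingAutEquiv

end LinearLift

section DualCode

variable {F ι : Type*} [Field F] [Fintype ι]

/-- The dual code, as a subspace. -/
def dualCode (C : Submodule F (ι → F)) : Submodule F (ι → F) :=
  C.dualAnnihilator.comap (dotProductBilin F F)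

variable (C : Submodule F (ι → F))

theorem coe_dualCode : (dualCode C : Set (ι → F)) = dualSet (C : Set (ι → F)) := by
  ext y
  rw [SetLike.mem_coe, dualCode, Submodule.mem_comap, Submodule.mem_dualAnnihilator]
  exact forall₂_congr fun x _ => (congrArg (· = 0) (dotProduct_comm y x)).to_iff

theorem finrank_dualCode :
    Module.finrank F C + Module.finrank F (dualCode C) = Fintype.card ι := by
  classical
  change _ + Module.finrank F (C.dualAnnihilator.comap (dotProductEquiv F ι).toLinearMap) = _
  rw [Submodule.comap_equiv_eq_map_symm, LinearEquiv.finrank_map_eq,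
    Subspace.finrank_add_finrank_dualAnnihilator_eq, Module.finrank_fintype_fun_eq_card]

theorem dualSet_dualSet : dualSet (dualSet (C : Set (ι → F))) = C := by
  have hle : C ≤ dualCode (dualCode C) := by
    rw [← SetLike.coe_subset_coe, coe_dualCode, coe_dualCode]
    exact fun x hx y hy => (dotProduct_comm y x).trans (hy x hx)
  have hC := finrank_dualCode C
  have hC' := finrank_dualCode (dualCode C)
  rw [← coe_dualCode, ← coe_dualCode, ← Submodule.eq_of_le_of_finrank_eq hle (by omega)]

end DualCode

section Contragredient

theorem eq_zero_of_forall_trace_mul_eq_zero {k L : Type*} [Field k] [Field L] [Algebra k L]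
    [FiniteDimensional k L] [Algebra.IsSeparable k L] {a : L}
    (h : ∀ b, Algebra.trace k L (a * b) = 0) : a = 0 :=
  (traceForm_nondegenerate k L).1 a h

variable {F ι : Type*} [Field F] [Fintype ι] {p : ℕ} [Fact p.Prime] [Algebra (ZMod p) F]

theorem trace_ringEquiv (τ : F ≃+* F) (a : F) :
    Algebra.trace (ZMod p) F (τ a) = Algebra.trace (ZMod p) F a :=
  Algebra.trace_eq_of_algEquiv (AlgEquiv.ofRingEquiv (f := τ) fun r => RingHom.congr_fun
    (Subsingleton.elim ((τ : F →+* F).comp (algebraMap (ZMod p) F)) (algebraMap (ZMod p) F)) r) a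

theorem exists_perm_trace_mul_eq [Finite F] {σ : Equiv.Perm F}
    (hσ : ∀ a b, σ (a + b) = σ a + σ b) :
    ∃ ρ : Equiv.Perm F, ρ 0 = 0 ∧
      ∀ a b, Algebra.trace (ZMod p) F (σ a * ρ b) = Algebra.trace (ZMod p) F (a * b) := by
  let S : F ≃ₗ[ZMod p] F :=
    LinearEquiv.ofBijective ((AddMonoidHom.mk' σ hσ).toZModLinearMap p) σ.bijective
  let D := (Algebra.traceForm (ZMod p) F).toDual (traceForm_nondegenerate (ZMod p) F)
  let ρ : F ≃ₗ[ZMod p] F := D.trans (S.symm.dualMap.trans D.symm)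
  refine ⟨ρ.toEquiv, map_zero ρ, fun a b => ?_⟩
  have hρ : D (ρ b) (S a) = D b (S.symm (S a)) :=
    LinearMap.congr_fun (D.apply_symm_apply (S.symm.dualMap (D b))) (S a)
  rw [S.symm_apply_apply] at hρ
  rw [mul_comm, mul_comm a]
  exact hρ

variable (p) in
/-- The permutations `e` and `e'` of words are adjoint inverses of each other with respect to the
form `(x, y) ↦ Tr (x ⬝ᵥ y)`, where `Tr` is the trace to the prime field. Unlike the standard inner
product, this form is suited to maps that are merely additive. -/
def IsContragredient (e e' : Equiv.Perm (ι → F)) : Prop :=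
  ∀ x y, Algebra.trace (ZMod p) F (e x ⬝ᵥ e' y) = Algebra.trace (ZMod p) F (x ⬝ᵥ y)

theorem isContragredient_coordPerm (π : Equiv.Perm ι) {σ ρ : ι → Equiv.Perm F}
    (h : ∀ i a b, Algebra.trace (ZMod p) F (σ i a * ρ i b) = Algebra.trace (ZMod p) F (a * b)) :
    IsContragredient p (coordPerm π σ) (coordPerm π ρ) := fun x y => by
  simp only [dotProduct, map_sum, coordPerm_apply, h]
  exact Equiv.sum_comp π⁻¹ fun i => Algebra.trace (ZMod p) F (x i * y i)

theorem mem_dualSet_iff_trace [Finite F] {C : Submodule F (ι → F)} {y : ι → F} :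
    y ∈ dualSet (C : Set (ι → F)) ↔ ∀ x ∈ C, Algebra.trace (ZMod p) F (x ⬝ᵥ y) = 0 := by
  refine ⟨fun hy x hx => (congrArg _ (hy x hx)).trans (map_zero _), fun hy x hx => ?_⟩
  refine eq_zero_of_forall_trace_mul_eq_zero (k := ZMod p) fun b => ?_
  rw [mul_comm, ← smul_eq_mul]
  exact (congrArg _ (smul_dotProduct b x y).symm).trans (hy _ (C.smul_mem b hx))

namespace IsContragredient

variable {e e₁ e₂ e' e₁' e₂' : Equiv.Perm (ι → F)}

theorem symm (h : IsContragredient p e e') : IsContragredient p e' e := fun x y => by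
  rw [dotProduct_comm, h, dotProduct_comm]

theorem mul (h₁ : IsContragredient p e₁ e₁') (h₂ : IsContragredient p e₂ e₂') :
    IsContragredient p (e₁ * e₂) (e₁' * e₂') := fun x y => by
  rw [Equiv.Perm.mul_apply, Equiv.Perm.mul_apply, h₁, h₂]

variable [Finite F]

theorem eq_of_forall_trace (h : IsContragredient p e e') {y z : ι → F}
    (hz : ∀ x, Algebra.trace (ZMod p) F (e x ⬝ᵥ z) = Algebra.trace (ZMod p) F (x ⬝ᵥ y)) :
    z = e' y := by
  classical
  refine funext fun i => sub_eq_zero.1 ?_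
  refine eq_zero_of_forall_trace_mul_eq_zero (k := ZMod p) fun b => ?_
  obtain ⟨x, hx⟩ := e.surjective (Pi.single i b)
  rw [mul_comm, mul_sub, map_sub, ← single_dotProduct, ← single_dotProduct, ← hx, hz, h, sub_self]

theorem unique (h₁ : IsContragredient p e e₁') (h₂ : IsContragredient p e e₂') : e₁' = e₂' :=
  Equiv.ext fun y => h₂.eq_of_forall_trace fun x => h₁ x y

theorem map_smul (h : IsContragredient p e e') (he : ∀ (r : F) v, e (r • v) = r • e v) (r : F)
    (v : ι → F) : e' (r • v) = r • e' v :=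
  (h.eq_of_forall_trace fun x => by
    rw [dotProduct_smul, ← smul_dotProduct, ← he, h, smul_dotProduct, dotProduct_smul]).symm

theorem image_dualSet (h : IsContragredient p e e') {C : Submodule F (ι → F)}
    (hC : e '' C = C) : Set.image e' (dualSet (C : Set (ι → F))) = dualSet C := by
  have hmem (y : ι → F) : e' y ∈ dualSet (C : Set (ι → F)) ↔ y ∈ dualSet (C : Set (ι → F)) := by
    rw [mem_dualSet_iff_trace (p := p), mem_dualSet_iff_trace (p := p)]
    calc (∀ x ∈ C, Algebra.trace (ZMod p) F (x ⬝ᵥ e' y) = 0)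
        ↔ ∀ x ∈ e '' (C : Set (ι → F)), Algebra.trace (ZMod p) F (x ⬝ᵥ e' y) = 0 := by
          rw [hC]; rfl
      _ ↔ ∀ x ∈ C, Algebra.trace (ZMod p) F (x ⬝ᵥ y) = 0 := by
          simp only [Set.forall_mem_image, h _ _]; rfl
  rw [Equiv.image_eq_preimage_symm]
  ext y
  rw [Set.mem_preimage, ← hmem, Equiv.apply_symm_apply]

end IsContragredient

variable [Finite F] {C : Submodule F (ι → F)} {e : Equiv.Perm (ι → F)}

variable (p) in
theorem exists_isContragredient_of_mem_aut0Set (he : e ∈ aut0Set (C : Set (ι → F)))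
    (hadd : ∀ v w, e (v + w) = e v + e w) :
    ∃ e' ∈ aut0Set (dualSet (C : Set (ι → F))), IsContragredient p e e' := by
  classical
  obtain ⟨⟨π, σ, -, rfl⟩, hC⟩ := mem_aut0Set_iff.1 he
  have hσadd (i : ι) (a b : F) : σ i (a + b) = σ i a + σ i b := by
    simpa only [Pi.add_apply, coordPerm_apply] using congrFun (hadd (fun _ => a) fun _ => b) i
  choose ρ hρ htr using fun i => exists_perm_trace_mul_eq (p := p) (hσadd i)
  have hcontra := isContragredient_coordPerm π htr
  exact ⟨_, mem_aut0Set_iff.2 ⟨⟨π, ρ, hρ, rfl⟩, hcontra.image_dualSet hC⟩, hcontra⟩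

variable (p) in
theorem exists_isContragredient_of_mem_autSSet (he : e ∈ autSSet (C : Set (ι → F))) :
    ∃ e' ∈ autSSet (dualSet (C : Set (ι → F))), IsContragredient p e e' := by
  obtain ⟨⟨π, τ, c, hc, rfl⟩, hC⟩ := mem_autSSet_iff.1 he
  have hc' (i : ι) : (c i)⁻¹ ≠ 0 := inv_ne_zero (hc i)
  have hcontra : IsContragredient p (coordPerm π fun i => semilinearPerm τ (hc i))
      (coordPerm π fun i => semilinearPerm τ (hc' i)) :=
    isContragredient_coordPerm π fun i a b => by
      rw [semilinearPerm_apply, semilinearPerm_apply, mul_mul_mul_comm, mul_inv_cancel₀ (hc i),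
        one_mul, ← map_mul, trace_ringEquiv]
  exact ⟨_, mem_autSSet_iff.2 ⟨⟨π, τ, _, hc', rfl⟩, hcontra.image_dualSet hC⟩, hcontra⟩

end Contragredient

section DualAutomorphisms

variable {F ι : Type*} [Field F] [Finite F] [Fintype ι] {C : Submodule F (ι → F)}

theorem exists_isContragredient_of_mem_autMSet (p : ℕ) [Fact p.Prime] [Algebra (ZMod p) F]
    {e : Equiv.Perm (ι → F)} (he : e ∈ autMSet (C : Set (ι → F))) :
    ∃ e' ∈ autMSet (dualSet (C : Set (ι → F))), IsContragredient p e e' := by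
  obtain ⟨heS, hsmul⟩ := mem_autMSet_iff_mem_autSSet.1 he
  obtain ⟨e', he', h⟩ := exists_isContragredient_of_mem_autSSet p heS
  exact ⟨e', mem_autMSet_iff_mem_autSSet.2 ⟨he', h.map_smul hsmul⟩, h⟩

theorem card_autMSet_le_card_autMSet_dualSet :
    Nat.card (autMSet (C : Set (ι → F))) ≤ Nat.card (autMSet (dualSet (C : Set (ι → F)))) := by
  obtain ⟨p, _⟩ := CharP.exists F
  have : Fact p.Prime := ⟨CharP.char_is_prime F p⟩
  let := ZMod.algebra F p
  choose dual hdual h using fun e : autMSet (C : Set (ι → F)) =>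
    exists_isContragredient_of_mem_autMSet p e.2
  refine Nat.card_le_card_of_injective (fun e => ⟨dual e, hdual e⟩) fun e₁ e₂ he => Subtype.ext ?_
  have hdual : dual e₁ = dual e₂ := Subtype.ext_iff.1 he
  exact (h e₁).symm.unique (hdual ▸ (h e₂).symm)

theorem card_autMSet_dualSet :
    Nat.card (autMSet (dualSet (C : Set (ι → F)))) = Nat.card (autMSet (C : Set (ι → F))) := by
  refine le_antisymm ?_ card_autMSet_le_card_autMSet_dualSet
  have h := card_autMSet_le_card_autMSet_dualSet (C := dualCode C)
  rwa [coe_dualCode, dualSet_dualSet] at h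

theorem HasSemilinearAut0.dual {G : Type*} [Group G] (h : HasSemilinearAut0 G (C : Set (ι → F)))
    (hadd : ∀ e ∈ aut0Set (dualSet (C : Set (ι → F))), ∀ v w, e (v + w) = e v + e w) :
    HasSemilinearAut0 G (dualSet (C : Set (ι → F))) := by
  obtain ⟨p, _⟩ := CharP.exists F
  have : Fact p.Prime := ⟨CharP.char_is_prime F p⟩
  let := ZMod.algebra F p
  obtain ⟨heq, φ, hinj, hrange⟩ := h
  have hex (g : G) : ∃ e' ∈ autSSet (dualSet (C : Set (ι → F))), IsContragredient p (φ g) e' := by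
    refine exists_isContragredient_of_mem_autSSet p ?_
    rw [← heq, ← hrange]
    exact ⟨g, rfl⟩
  obtain ⟨ψ, hψ⟩ := exists_monoidHom_of_rel (r := fun g e' => IsContragredient p (φ g) e')
    (fun g => (hex g).imp fun _ h => h.2) IsContragredient.unique
    fun hg hh => by rw [map_mul]; exact hg.mul hh
  have hψS : Set.range ψ ⊆ autSSet (dualSet (C : Set (ι → F))) := by
    rintro _ ⟨g, rfl⟩
    obtain ⟨e', he', h⟩ := hex g
    rwa [(hψ g).unique h]
  have hψ0 : aut0Set (dualSet (C : Set (ι → F))) ⊆ Set.range ψ := fun e' he' => by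
    rw [← coe_dualCode] at he' hadd
    obtain ⟨e, he, h⟩ := exists_isContragredient_of_mem_aut0Set p he' (hadd e' he')
    rw [coe_dualCode, dualSet_dualSet, ← hrange] at he
    obtain ⟨g, rfl⟩ := he
    exact ⟨g, (hψ g).unique h.symm⟩
  have hS0 := autSSet_subset_aut0Set (dualSet (C : Set (ι → F)))
  refine ⟨(hψ0.trans hψS).antisymm hS0, ψ, fun g g' hg => hinj ?_, (hψS.trans hS0).antisymm hψ0⟩
  exact (hψ g).symm.unique (hg ▸ (hψ g').symm)

end DualAutomorphisms

section Additivity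

variable {F ι : Type*} [Field F]

theorem map_add_of_mem_aut0Set_of_card_eq_two {C : Set (ι → F)} {e : Equiv.Perm (ι → F)}
    (hF : Nat.card F = 2) (he : e ∈ aut0Set C) (v w : ι → F) : e (v + w) = e v + e w := by
  obtain ⟨⟨π, σ, hσ, rfl⟩, -⟩ := mem_aut0Set_iff.1 he
  obtain ⟨u, -, hu⟩ := (Nat.card_eq_two_iff' (0 : F)).1 hF
  have hσ_eq (i : ι) (a : F) : σ i a = a := by
    rcases eq_or_ne a 0 with rfl | ha
    · exact hσ i
    · have hσa : σ i a ≠ 0 := fun h => ha ((σ i).injective (h.trans (hσ i).symm))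
      exact (hu _ hσa).trans (hu a ha).symm
  funext i
  simp only [Pi.add_apply, coordPerm_apply, hσ_eq]

/-- The code `C` is maximum distance separable: a word of `C` is determined by its entries in any
`dim C` positions. -/
def IsMDS (C : Submodule F (ι → F)) : Prop :=
  ∀ v ∈ C, ∀ s : Finset ι, Module.finrank F C ≤ #s → (∀ i ∈ s, v i = 0) → v = 0

namespace IsMDS

variable {C : Submodule F (ι → F)}

theorem exists_mem_apply_eq [Finite ι] (hC : IsMDS C) {s : Finset ι} (hs : #s ≤ Module.finrank F C)
    (f : ι → F) : ∃ v ∈ C, ∀ i ∈ s, v i = f i := by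
  have := Fintype.ofFinite ι
  have hle : Module.finrank F C ≤ Fintype.card ι := by
    simpa only [Module.finrank_fintype_fun_eq_card] using C.finrank_le
  obtain ⟨t, hst, -, ht⟩ := Finset.exists_subsuperset_card_eq (Finset.subset_univ s) hs hle
  let restrict : C →ₗ[F] t → F := (LinearMap.funLeft F F (Subtype.val : t → ι)).comp C.subtype
  have hinj : Function.Injective restrict :=
    (injective_iff_map_eq_zero restrict).2 fun v hv =>
      Subtype.ext (hC v v.2 t ht.ge fun i hi => congrFun hv ⟨i, hi⟩)
  have hfinrank : Module.finrank F C = Module.finrank F (t → F) := by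
    rw [Module.finrank_fintype_fun_eq_card, Fintype.card_coe, ht]
  obtain ⟨v, hv⟩ :=
    (LinearMap.injective_iff_surjective_of_finrank_eq_finrank hfinrank).1 hinj fun i => f i
  exact ⟨v, v.2, fun i hi => congrFun hv ⟨i, hst hi⟩⟩

theorem dual [Fintype ι] (hC : IsMDS C) : IsMDS (dualCode C) := by
  classical
  intro y hy s hs hys
  have hcard : #sᶜ ≤ Module.finrank F C := by
    have := finrank_dualCode C
    rw [Finset.card_compl]
    omega
  funext i
  by_cases hi : i ∈ s
  · exact hys i hi
  obtain ⟨x, hx, hxi⟩ := hC.exists_mem_apply_eq hcard (Pi.single i 1)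
  rw [← SetLike.mem_coe, coe_dualCode] at hy
  rw [Pi.zero_apply, ← hy x hx, Finset.sum_eq_single i]
  · rw [hxi i (Finset.mem_compl.2 hi), Pi.single_eq_same, one_mul]
  · intro j _ hji
    by_cases hj : j ∈ s
    · rw [hys j hj, mul_zero]
    · rw [hxi j (Finset.mem_compl.2 hj), Pi.single_eq_of_ne hji, zero_mul]
  · exact fun h => absurd (Finset.mem_univ i) h

theorem exists_mem_apply_eq_of_notMem [Finite ι] [DecidableEq ι] (hC : IsMDS C) {t : Finset ι}
    (ht : #t = Module.finrank F C) {j u : ι} (hj : j ∉ t) (hu : u ∈ t) (r : F) :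
    ∃ c ∈ C, c j = r ∧ ∀ i ∈ t.erase u, c i = 0 := by
  obtain ⟨c, hc, hci⟩ := hC.exists_mem_apply_eq (s := insert j (t.erase u))
    (by rw [Finset.card_insert_of_notMem fun h => hj (Finset.mem_of_mem_erase h),
          Finset.card_erase_add_one hu, ht]) (Pi.single j r)
  refine ⟨c, hc, ?_, fun i hi => ?_⟩
  · rw [hci j (Finset.mem_insert_self _ _), Pi.single_eq_same]
  · rw [hci i (Finset.mem_insert_of_mem hi), Pi.single_eq_of_ne]
    exact fun h => hj (h ▸ Finset.mem_of_mem_erase hi)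

theorem map_add_of_mem_aut0Set [Fintype ι] (hC : IsMDS C) (h2 : 2 ≤ Module.finrank F C)
    (hlt : Module.finrank F C < Fintype.card ι) {e : Equiv.Perm (ι → F)}
    (he : e ∈ aut0Set (C : Set (ι → F))) (v w : ι → F) : e (v + w) = e v + e w := by
  classical
  obtain ⟨⟨π, σ, hσ, rfl⟩, himage⟩ := mem_aut0Set_iff.1 he
  have hmem {c : ι → F} (hc : c ∈ C) : coordPerm π σ c ∈ C :=
    himage.subset (Set.mem_image_of_mem _ hc)
  suffices hadd : ∀ j a b, σ (π j) (a + b) = σ (π j) a + σ (π j) b by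
    funext i
    obtain ⟨j, rfl⟩ := π.surjective i
    exact hadd j _ _
  intro j a b
  obtain ⟨t, hjt, ht⟩ : ∃ t : Finset ι, j ∉ t ∧ #t = Module.finrank F C := by
    obtain ⟨t, hjt, ht⟩ := Finset.exists_subset_card_eq (s := {j}ᶜ) (n := Module.finrank F C)
      (by rw [Finset.card_compl, Finset.card_singleton]; omega)
    exact ⟨t, fun hj => by simpa using hjt hj, ht⟩
  obtain ⟨x, hx, y, hy, hxy⟩ := Finset.one_lt_card.1 (h2.trans ht.ge)
  obtain ⟨c, hc, rfl, hcx⟩ := hC.exists_mem_apply_eq_of_notMem ht hjt hx a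
  obtain ⟨d, hd, rfl, hdy⟩ := hC.exists_mem_apply_eq_of_notMem ht hjt hy b
  let f := coordPerm π σ (c + d) - coordPerm π σ c - coordPerm π σ d
  have hfC : f ∈ C := sub_mem (sub_mem (hmem (add_mem hc hd)) (hmem hc)) (hmem hd)
  have hf (i : ι) : f (π i) = σ (π i) (c i + d i) - σ (π i) (c i) - σ (π i) (d i) := by
    simp only [f, Pi.sub_apply, Pi.add_apply, coordPerm_apply, Equiv.Perm.inv_def,
      Equiv.symm_apply_apply]
  have hzero : f = 0 := by
    refine hC f hfC (t.map π.toEmbedding) (by rw [Finset.card_map, ht]) ?_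
    rw [Finset.forall_mem_map]
    intro i hi
    refine (hf i).trans ?_
    rcases eq_or_ne i x with rfl | hix
    · rw [hdy i (Finset.mem_erase.2 ⟨hxy, hi⟩), hσ, add_zero, sub_zero, sub_self]
    · rw [hcx i (Finset.mem_erase.2 ⟨hix, hi⟩), hσ, zero_add, sub_zero, sub_self]
  rw [← sub_eq_zero, ← sub_sub, ← hf, hzero, Pi.zero_apply]

end IsMDS

end Additivity

section EvaluationCode

variable {R ι E : Type*} [Field R] [AddCommGroup E] [Module R E] [Fintype ι]

theorem dualCode_ker_linearCombination (u : ι → E) :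
    dualCode (LinearMap.ker (Fintype.linearCombination R u)) =
      LinearMap.range (LinearMap.pi fun j => Module.Dual.eval R E (u j)) := by
  classical
  ext w
  rw [dualCode, Submodule.mem_comap, ← LinearMap.range_dualMap_eq_dualAnnihilator_ker]
  refine exists_congr fun ℓ => ?_
  rw [← (dotProductEquiv R ι).symm.injective.eq_iff]
  refine Eq.congr ?_ (LinearEquiv.symm_apply_apply _ w)
  funext j
  change ℓ (Fintype.linearCombination R u (Pi.single j 1)) = ℓ (u j)
  rw [Fintype.linearCombination_apply_single, one_smul]

theorem mem_dualSet_ker_linearCombination {u : ι → E} {w : ι → R} :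
    w ∈ dualSet (LinearMap.ker (Fintype.linearCombination R u) : Set (ι → R)) ↔
      ∃ ℓ : Module.Dual R E, ∀ j, w j = ℓ (u j) := by
  rw [← coe_dualCode, SetLike.mem_coe, dualCode_ker_linearCombination]
  exact exists_congr fun ℓ => eq_comm.trans funext_iff

theorem finrank_dualCode_ker_linearCombination {u : ι → E}
    (hu : ∀ ℓ : Module.Dual R E, (∀ j, ℓ (u j) = 0) → ℓ = 0) :
    Module.finrank R (dualCode (LinearMap.ker (Fintype.linearCombination R u))) =
      Module.finrank R E := by
  rw [dualCode_ker_linearCombination, LinearMap.finrank_range_of_inj, Subspace.dual_finrank_eq]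
  exact (injective_iff_map_eq_zero _).2 fun ℓ hℓ => hu ℓ (congrFun hℓ)

theorem isMDS_dualCode_ker_linearCombination {u : ι → E}
    (hcard : Module.finrank R E ≤ Fintype.card ι)
    (hu : ∀ (ℓ : Module.Dual R E) (s : Finset ι), Module.finrank R E ≤ #s →
      (∀ j ∈ s, ℓ (u j) = 0) → ℓ = 0) :
    IsMDS (dualCode (LinearMap.ker (Fintype.linearCombination R u))) := by
  intro w hw s hs hws
  rw [finrank_dualCode_ker_linearCombination fun ℓ hℓ => hu ℓ Finset.univ hcard fun j _ => hℓ j]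
    at hs
  rw [← SetLike.mem_coe, coe_dualCode, mem_dualSet_ker_linearCombination] at hw
  obtain ⟨ℓ, hℓ⟩ := hw
  obtain rfl := hu ℓ s hs fun j hj => by rw [← hℓ, hws j hj]
  exact funext hℓ

end EvaluationCode

section Conic

variable {F V : Type*} [Field F] [AddCommGroup V] [Module F V] {Q : QuadraticForm F V}

theorem eq_zero_or_eq_one_of_anisotropic (hQ : Q.Anisotropic) {x d : V} {t : F} (hd : d ≠ 0)
    (h1 : Q (x + d) = Q x) (ht : Q (x + t • d) = Q x) : t = 0 ∨ t = 1 := by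
  rw [QuadraticMap.map_add Q] at h1 ht
  rw [QuadraticMap.map_smul, QuadraticMap.polar_smul_right, smul_eq_mul, smul_eq_mul] at ht
  have h : Q d * (t * (t - 1)) = 0 := by linear_combination ht - t * h1
  rcases mul_eq_zero.1 h with h | h
  · exact absurd (hQ d h) hd
  · exact (mul_eq_zero.1 h).imp_right sub_eq_zero.1

theorem eq_zero_of_apply_prodMk_eq_zero (h2 : Module.finrank F V = 2) (hQ : Q.Anisotropic)
    {ℓ : Module.Dual F (F × V)} {x y z : V} (hxy : x ≠ y) (hxz : x ≠ z) (hyz : y ≠ z)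
    (hQy : Q y = Q x) (hQz : Q z = Q x) (hx : ℓ (1, x) = 0) (hy : ℓ (1, y) = 0)
    (hz : ℓ (1, z) = 0) : ℓ = 0 := by
  have : FiniteDimensional F V := Module.finite_of_finrank_eq_succ h2
  let f : Module.Dual F V := ℓ.comp (LinearMap.inr F F V)
  have hf {w : V} (hw : ℓ (1, w) = 0) : f (w - x) = 0 := by
    have h : ((0 : F), w - x) = (1, w) - (1, x) := by rw [Prod.mk_sub_mk, sub_self]
    rw [LinearMap.comp_apply, LinearMap.inr_apply, h, map_sub, hw, hx, sub_self]
  have hf0 : f = 0 := by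
    by_contra hne
    have hker : Module.finrank F (LinearMap.ker f) = 1 := by
      have := Module.Dual.finrank_ker_add_one_of_ne_zero hne
      omega
    obtain ⟨t, ht⟩ := (finrank_eq_one_iff_of_nonzero' (⟨y - x, hf hy⟩ : LinearMap.ker f)
      (fun h => hxy (sub_eq_zero.1 (congrArg Subtype.val h)).symm)).1 hker ⟨z - x, hf hz⟩
    have ht' : t • (y - x) = z - x := congrArg Subtype.val ht
    rcases eq_zero_or_eq_one_of_anisotropic (t := t) hQ (sub_ne_zero.2 hxy.symm)
      (by rw [add_sub_cancel, hQy]) (by rw [ht', add_sub_cancel, hQz]) with rfl | rfl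
    · exact hxz (sub_eq_zero.1 (by rw [← ht', zero_smul])).symm
    · exact hyz (sub_left_inj.1 ((one_smul F _).symm.trans ht'))
  have hℓ (w : V) : ℓ (0, w) = 0 := LinearMap.congr_fun hf0 w
  refine LinearMap.ext fun ⟨c, w⟩ => ?_
  have h : (c, w) = c • ((1 : F), x) + (0, w - c • x) := by
    rw [Prod.smul_mk, Prod.mk_add_mk, smul_eq_mul, mul_one, add_zero, add_sub_cancel]
  rw [h, map_add, map_smul, hx, smul_zero, hℓ, add_zero, LinearMap.zero_apply]

theorem eq_zero_of_apply_graph_eq_zero {ι : Type*} {z : ι → V} (h2 : Module.finrank F V = 2)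
    (hQ : Q.Anisotropic) (hinj : Function.Injective z) (hz : ∀ j, Q (z j) = 1)
    {ℓ : Module.Dual F (F × V)} {s : Finset ι} (hs : 3 ≤ #s)
    (hℓ : ∀ j ∈ s, ℓ (Q (z j), z j) = 0) : ℓ = 0 := by
  obtain ⟨i, hi, j, hj, k, hk, hij, hik, hjk⟩ := Finset.two_lt_card.1 hs
  simp only [hz] at hℓ
  exact eq_zero_of_apply_prodMk_eq_zero h2 hQ (hinj.ne hij) (hinj.ne hik) (hinj.ne hjk)
    ((hz j).trans (hz i).symm) ((hz k).trans (hz i).symm) (hℓ i hi) (hℓ j hj) (hℓ k hk)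

end Conic

section ConicCode

variable {F ι V : Type*} [Field F] [CharP F 2] [AddCommGroup V] [Module F V] [Fintype ι]
  {Q : QuadraticForm F V} {z : ι → V}

theorem graphCode_eq_ker_of_forall_eq_one (hz : ∀ j, Q (z j) = 1) :
    graphCode F Q z = LinearMap.ker (Fintype.linearCombination F fun j => (Q (z j), z j)) := by
  ext v
  have hsq : ∑ j, Q (v j • z j) = (∑ j, v j) ^ 2 := by
    simp only [QuadraticMap.map_smul, hz, smul_eq_mul, mul_one, CharTwo.sum_sq, ← pow_two]
  have hlin : ∑ j, v j • (Q (z j), z j) = (∑ j, v j, ∑ j, v j • z j) := by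
    simp only [hz, Prod.smul_mk, smul_eq_mul, mul_one, Prod.ext_iff, Prod.fst_sum, Prod.snd_sum,
      and_self]
  rw [LinearMap.mem_ker, Fintype.linearCombination_apply, hlin, Prod.mk_eq_zero,
    ← sq_eq_zero_iff (a := ∑ j, v j), ← hsq, ← Prod.mk_eq_zero]
  rfl

theorem isMDS_dualCode_graphCode (h2 : Module.finrank F V = 2) (hQ : Q.Anisotropic)
    (hinj : Function.Injective z) (hz : ∀ j, Q (z j) = 1) (h3 : 3 ≤ Fintype.card ι) :
    IsMDS (dualCode (graphCode F Q z)) := by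
  have : FiniteDimensional F V := Module.finite_of_finrank_eq_succ h2
  have hE : Module.finrank F (F × V) = 3 := by rw [Module.finrank_prod, Module.finrank_self, h2]
  rw [graphCode_eq_ker_of_forall_eq_one hz]
  exact isMDS_dualCode_ker_linearCombination (hE.trans_le h3) fun ℓ s hs hℓ =>
    eq_zero_of_apply_graph_eq_zero h2 hQ hinj hz (hE.ge.trans hs) hℓ

theorem finrank_dualCode_graphCode (h2 : Module.finrank F V = 2) (hQ : Q.Anisotropic)
    (hinj : Function.Injective z) (hz : ∀ j, Q (z j) = 1) (h3 : 3 ≤ Fintype.card ι) :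
    Module.finrank F (dualCode (graphCode F Q z)) = 3 := by
  have : FiniteDimensional F V := Module.finite_of_finrank_eq_succ h2
  rw [graphCode_eq_ker_of_forall_eq_one hz, finrank_dualCode_ker_linearCombination,
    Module.finrank_prod, Module.finrank_self, h2]
  exact fun ℓ hℓ => eq_zero_of_apply_graph_eq_zero h2 hQ hinj hz (s := Finset.univ) h3
    fun j _ => hℓ j

theorem map_add_of_mem_aut0Set_dualSet_graphCode (h2 : Module.finrank F V = 2)
    (hQ : Q.Anisotropic) (hinj : Function.Injective z) (hz : ∀ j, Q (z j) = 1)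
    (hι : Nat.card F = 2 ∨ 5 ≤ Fintype.card ι) {e : Equiv.Perm (ι → F)}
    (he : e ∈ aut0Set (dualSet (graphCode F Q z : Set (ι → F)))) (v w : ι → F) :
    e (v + w) = e v + e w := by
  rcases hι with hF | hι
  · exact map_add_of_mem_aut0Set_of_card_eq_two hF he v w
  · have h3 : 3 ≤ Fintype.card ι := by omega
    have hfin := finrank_dualCode_graphCode h2 hQ hinj hz h3
    rw [← coe_dualCode] at he
    exact (isMDS_dualCode_graphCode h2 hQ hinj hz h3).map_add_of_mem_aut0Set (by omega) (by omega)
      he v w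

theorem map_add_of_mem_aut0Set_graphCode (h2 : Module.finrank F V = 2)
    (hQ : Q.Anisotropic) (hinj : Function.Injective z) (hz : ∀ j, Q (z j) = 1)
    (hι : Nat.card F = 2 ∨ 5 ≤ Fintype.card ι) {e : Equiv.Perm (ι → F)}
    (he : e ∈ aut0Set (graphCode F Q z : Set (ι → F))) (v w : ι → F) :
    e (v + w) = e v + e w := by
  rcases hι with hF | hι
  · exact map_add_of_mem_aut0Set_of_card_eq_two hF he v w
  · have h3 : 3 ≤ Fintype.card ι := by omega
    have hfin := finrank_dualCode_graphCode h2 hQ hinj hz h3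
    have hfin' := finrank_dualCode (dualCode (graphCode F Q z))
    rw [← dualSet_dualSet (graphCode F Q z), ← coe_dualCode, ← coe_dualCode] at he
    exact (isMDS_dualCode_graphCode h2 hQ hinj hz h3).dual.map_add_of_mem_aut0Set (by omega)
      (by omega) he v w

end ConicCode

section NormForm

variable {F K : Type*} [Field F] [Field K] [Algebra F K]

theorem norm_one_add (h : Module.finrank F K = 2) (t : K) :
    Algebra.norm F (1 + t) = 1 + Algebra.trace F K t + Algebra.norm F t := by
  have : FiniteDimensional F K := Module.finite_of_finrank_eq_succ h
  let b := Module.finBasisOfFinrankEq F K h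
  rw [Algebra.norm_eq_matrix_det b, Algebra.norm_eq_matrix_det b, Algebra.trace_eq_matrix_trace b,
    map_add, map_one, Matrix.det_fin_two, Matrix.det_fin_two, Matrix.trace_fin_two]
  simp only [Matrix.add_apply, Matrix.one_apply_eq, Matrix.one_apply_ne zero_ne_one,
    Matrix.one_apply_ne one_ne_zero]
  ring

theorem polar_norm_mul (h : Module.finrank F K = 2) (x t : K) :
    QuadraticMap.polar (Algebra.norm F) x (x * t) = Algebra.norm F x * Algebra.trace F K t := by
  rw [QuadraticMap.polar, ← mul_one_add, map_mul, map_mul, norm_one_add h]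
  ring

theorem exists_forall_polar_norm_eq (h : Module.finrank F K = 2) (y : K) :
    ∃ f : K →ₗ[F] F, ∀ x, QuadraticMap.polar (Algebra.norm F) x y = f x := by
  rcases eq_or_ne y 0 with rfl | hy
  · have : FiniteDimensional F K := Module.finite_of_finrank_eq_succ h
    exact ⟨0, fun x => by
      rw [QuadraticMap.polar, add_zero, Algebra.norm_zero, sub_self, sub_zero,
        LinearMap.zero_apply]⟩
  · refine ⟨Algebra.norm F y • Algebra.trace F K ∘ₗ LinearMap.mulLeft F y⁻¹, fun x => ?_⟩
    rw [QuadraticMap.polar_comm, ← mul_inv_cancel_left₀ hy x, polar_norm_mul h,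
      mul_inv_cancel_left₀ hy]
    rfl

/-- The norm of a quadratic extension `K / F`, as a quadratic form on the plane `K` over `F`. -/
noncomputable def normForm (h : Module.finrank F K = 2) : QuadraticForm F K :=
  QuadraticMap.ofPolar (Algebra.norm F)
    (fun r x => by rw [Algebra.smul_def, map_mul, Algebra.norm_algebraMap, h, sq, smul_eq_mul])
    (fun x x' y => by
      obtain ⟨f, hf⟩ := exists_forall_polar_norm_eq h y
      simp only [hf, map_add])
    (fun r x y => by
      obtain ⟨f, hf⟩ := exists_forall_polar_norm_eq h y
      simp only [hf, map_smul])

theorem normForm_apply (h : Module.finrank F K = 2) (x : K) : normForm h x = Algebra.norm F x :=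
  rfl

theorem normForm_anisotropic (h : Module.finrank F K = 2) : (normForm h).Anisotropic := by
  have : FiniteDimensional F K := Module.finite_of_finrank_eq_succ h
  exact fun x hx => Algebra.norm_eq_zero_iff.1 hx

theorem normForm_polarBilin_separatingLeft [Algebra.IsSeparable F K]
    (h : Module.finrank F K = 2) : (normForm h).polarBilin.SeparatingLeft := by
  have : FiniteDimensional F K := Module.finite_of_finrank_eq_succ h
  intro x hx
  obtain ⟨t, ht⟩ := Algebra.trace_surjective F K 1
  refine (Algebra.norm_eq_zero_iff (R := F)).1 ?_
  rw [← mul_one (Algebra.norm F x), ← ht, ← polar_norm_mul h]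
  exact hx (x * t)

end NormForm

section TraceDual

variable {R F K : Type*} [Field R] [Field F] [Field K] [Algebra R F] [Algebra R K]
  [FiniteDimensional R F] [FiniteDimensional R K]

theorem exists_trace_mul_eq [Algebra.IsSeparable R K] (ℓ : Module.Dual R K) :
    ∃ δ : K, ∀ x, ℓ x = Algebra.trace R K (δ * x) := by
  refine ⟨((Algebra.traceForm R K).toDual (traceForm_nondegenerate R K)).symm ℓ, fun x => ?_⟩
  rw [← Algebra.traceForm_apply, LinearMap.BilinForm.apply_toDual_symm_apply]

theorem exists_dual_prod_iff_exists_trace [Algebra.IsSeparable R F] [Algebra.IsSeparable R K]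
    {ι : Type*} {a : ι → F} {z : ι → K} {w : ι → R} :
    (∃ ℓ : Module.Dual R (F × K), ∀ j, w j = ℓ (a j, z j)) ↔
      ∃ (c : F) (δ : K), ∀ j,
        w j = Algebra.trace R F (c * a j) + Algebra.trace R K (δ * z j) := by
  constructor
  · rintro ⟨ℓ, hℓ⟩
    obtain ⟨c, hc⟩ := exists_trace_mul_eq (ℓ.comp (LinearMap.inl R F K))
    obtain ⟨δ, hδ⟩ := exists_trace_mul_eq (ℓ.comp (LinearMap.inr R F K))
    refine ⟨c, δ, fun j => ?_⟩
    rw [hℓ, ← hc, ← hδ, LinearMap.comp_apply, LinearMap.comp_apply, ← map_add,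
      LinearMap.inl_apply, LinearMap.inr_apply, Prod.mk_add_mk, add_zero, zero_add]
  · rintro ⟨c, δ, h⟩
    exact ⟨(Algebra.trace R F ∘ₗ LinearMap.mulLeft R c).coprod
      (Algebra.trace R K ∘ₗ LinearMap.mulLeft R δ), h⟩

end TraceDual

section BinaryGraphCode

variable {F ι V : Type*} [Field F] [CharP F 2] [Algebra (ZMod 2) F] [AddCommGroup V]
  [Module (ZMod 2) V] [Module F V] [IsScalarTower (ZMod 2) F V] [Fintype ι]

theorem graphCode_zmod_two_eq_ker (Q : QuadraticForm F V) (z : ι → V) :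
    graphCode (ZMod 2) Q z =
      LinearMap.ker (Fintype.linearCombination (ZMod 2) fun j => (Q (z j), z j)) := by
  have hsq (r : ZMod 2) : r * r = r := by rw [← sq, ZMod.pow_card]
  ext v
  have hlin : ∑ j, v j • (Q (z j), z j) = graphSum (ZMod 2) Q z v := by
    refine Prod.ext ?_ ?_
    · simp only [graphSum, AddMonoidHom.mk'_apply, Q.map_smul_of_tower, hsq, Prod.fst_sum,
        Prod.smul_mk]
    · simp only [graphSum, AddMonoidHom.mk'_apply, Prod.snd_sum, Prod.smul_mk]
  rw [LinearMap.mem_ker, Fintype.linearCombination_apply, hlin, mem_graphCode]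

end BinaryGraphCode

section LineFamilies

theorem isLineFamily_of_range_eq_setOf_apply_eq_one {F ι V : Type*} [Field F] [CharP F 2]
    [PerfectRing F 2] [AddCommGroup V] [Module F V] [Nontrivial V] {Q : QuadraticForm F V}
    (hQ : Q.Anisotropic) {z : ι → V} (hinj : Function.Injective z)
    (hz : Set.range z = {x | Q x = 1}) : IsLineFamily F z := by
  have hQz (j : ι) : Q (z j) = 1 := hz.le ⟨j, rfl⟩
  have hexists {x : V} (hx : x ≠ 0) : ∃ (j : ι) (r : F), r • z j = x := by
    obtain ⟨s, hs⟩ := surjective_frobenius F 2 (Q x)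
    rw [frobenius_def, sq] at hs
    have hs0 : s ≠ 0 := by
      rintro rfl
      exact hx (hQ x (by rw [← hs, zero_mul]))
    obtain ⟨j, hj⟩ : s⁻¹ • x ∈ Set.range z := by
      rw [hz, Set.mem_ofPred_eq, Q.map_smul, ← hs, smul_eq_mul]
      field_simp
    exact ⟨j, s, by rw [hj, smul_inv_smul₀ hs0]⟩
  refine ⟨fun j h => ?_, fun x => ?_, fun {i j r s} hr h => hinj ?_⟩
  · exact one_ne_zero ((hQz j).symm.trans (by rw [h, map_zero]))
  · rcases eq_or_ne x 0 with rfl | hx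
    · obtain ⟨y, hy⟩ := exists_ne (0 : V)
      exact ⟨(hexists hy).choose, 0, zero_smul F _⟩
    · exact hexists hx
  · have hrs : r = s := by
      have hQrs := congrArg Q h
      rwa [Q.map_smul, Q.map_smul, hQz, hQz, smul_eq_mul, smul_eq_mul, mul_one, mul_one,
        ← sq, ← sq, CharTwo.sq_inj] at hQrs
    exact smul_right_injective V hr (h.trans (by rw [hrs]))

theorem isLineFamily_of_range_eq_setOf_norm_eq_one {F K ι : Type*}
    [Field F] [Field K] [Algebra F K] [CharP F 2] [PerfectRing F 2] {z : ι → K}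
    (h : Module.finrank F K = 2) (hinj : Function.Injective z)
    (hz : Set.range z = {x | Algebra.norm F x = 1}) :
    IsLineFamily F z :=
  isLineFamily_of_range_eq_setOf_apply_eq_one (normForm_anisotropic h) hinj hz

theorem isLineFamily_zmod_two {ι V : Type*} [AddCommGroup V] [Module (ZMod 2) V] [Nontrivial V]
    {z : ι → V} (hinj : Function.Injective z) (hz : Set.range z = {0}ᶜ) :
    IsLineFamily (ZMod 2) z := by
  have hcases : ∀ r : ZMod 2, r = 0 ∨ r = 1 := by decide
  have hz0 (j : ι) : z j ≠ 0 := hz.le ⟨j, rfl⟩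
  have hexists {x : V} (hx : x ≠ 0) : ∃ j, z j = x := hz.ge hx
  refine ⟨hz0, fun x => ?_, fun {i j r s} hr h => ?_⟩
  · rcases eq_or_ne x 0 with rfl | hx
    · obtain ⟨y, hy⟩ := exists_ne (0 : V)
      exact ⟨(hexists hy).choose, 0, zero_smul _ _⟩
    · exact (hexists hx).imp fun j hj => ⟨1, by rw [one_smul, hj]⟩
  · obtain rfl : r = 1 := (hcases r).resolve_left hr
    rw [one_smul] at h
    rcases hcases s with rfl | rfl
    · exact absurd (h.trans (zero_smul _ _)) (hz0 i)
    · exact hinj (h.trans (one_smul _ _))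

end LineFamilies

section PowerEnumeration

variable {A : Type*} [CommRing A] [IsDomain A] {x : A} {n : ℕ}

theorem injective_pow_succ_of_orderOf_eq (hx : orderOf x = n) :
    Function.Injective fun j : Fin n => x ^ ((j : ℕ) + 1) := by
  intro i j hij
  have hx0 : x ≠ 0 := by
    rintro rfl
    rw [orderOf_zero] at hx
    exact (hx ▸ i).elim0
  simp only [pow_succ] at hij
  exact Fin.ext (pow_injOn_Iio_orderOf (hx ▸ i.2) (hx ▸ j.2) (mul_right_cancel₀ hx0 hij))

theorem range_pow_succ_of_orderOf_eq (hn : 0 < n) (hx : orderOf x = n) :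
    Set.range (fun j : Fin n => x ^ ((j : ℕ) + 1)) = {w | w ^ n = 1} := by
  refine Set.Subset.antisymm ?_ fun w hw => ?_
  · rintro _ ⟨j, rfl⟩
    rw [Set.mem_ofPred_eq, pow_right_comm, orderOf_dvd_iff_pow_eq_one.1 hx.dvd, one_pow]
  · have : NeZero n := ⟨hn.ne'⟩
    obtain ⟨i, hi, rfl⟩ := (hx ▸ IsPrimitiveRoot.orderOf x).eq_pow_of_pow_eq_one hw
    rcases Nat.eq_zero_or_pos i with rfl | hi0
    · refine ⟨⟨n - 1, Nat.sub_lt hn one_pos⟩, ?_⟩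
      change x ^ (n - 1 + 1) = _
      rw [Nat.sub_add_cancel hn, ← hx, pow_orderOf_eq_one, pow_zero]
    · refine ⟨⟨i - 1, by omega⟩, ?_⟩
      change x ^ (i - 1 + 1) = _
      rw [Nat.sub_add_cancel hi0]

end PowerEnumeration

section FiniteFields

variable {F K : Type*} [Field F] [Field K] [Fintype F] [Algebra F K]

theorem finrank_eq_two_of_card_eq_sq [Fintype K] (h : Fintype.card K = Fintype.card F ^ 2) :
    Module.finrank F K = 2 :=
  Nat.pow_right_injective Fintype.one_lt_card ((Module.card_eq_pow_finrank (K := F)).symm.trans h)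

variable [Finite K]

theorem algebraMap_norm_eq_pow_card_add_one (h : Module.finrank F K = 2) (x : K) :
    algebraMap F K (Algebra.norm F x) = x ^ (Fintype.card F + 1) := by
  rw [FiniteField.algebraMap_norm_eq_pow_sum, h, Nat.card_eq_fintype_card, Finset.sum_range_succ,
    Finset.sum_range_one, pow_zero, pow_one, add_comm]

theorem norm_eq_one_iff_pow_card_add_one_eq_one (h : Module.finrank F K = 2) {x : K} :
    Algebra.norm F x = 1 ↔ x ^ (Fintype.card F + 1) = 1 := by
  rw [← algebraMap_norm_eq_pow_card_add_one h, map_eq_one_iff _ (algebraMap F K).injective]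

theorem range_pow_succ_eq_setOf_norm_eq_one (h : Module.finrank F K = 2) {ζ : K} {n : ℕ}
    (hn : n = Fintype.card F + 1) (hζ : orderOf ζ = n) :
    Set.range (fun j : Fin n => ζ ^ ((j : ℕ) + 1)) = {x | Algebra.norm F x = 1} := by
  rw [range_pow_succ_of_orderOf_eq (hn.trans_gt (Nat.succ_pos _)) hζ, hn]
  exact Set.ext fun x => (norm_eq_one_iff_pow_card_add_one_eq_one h).symm

theorem range_pow_succ_eq_compl_zero {K : Type*} [Field K] [Fintype K] {α : K} {n : ℕ}
    (hn : n = Fintype.card K - 1) (hα : orderOf α = n) :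
    Set.range (fun l : Fin n => α ^ ((l : ℕ) + 1)) = {0}ᶜ := by
  have hn0 : 0 < n := hn.trans_gt (Nat.sub_pos_of_lt Fintype.one_lt_card)
  rw [range_pow_succ_of_orderOf_eq hn0 hα]
  refine Set.ext fun x => ⟨?_, fun hx => hn ▸ FiniteField.pow_card_sub_one_eq_one x hx⟩
  rintro hx rfl
  exact zero_ne_one ((zero_pow hn0.ne').symm.trans hx)

theorem orderOf_pow_sub_one_of_orderOf_eq_sq_sub_one {G : Type*} [Monoid G] {x : G} {q : ℕ}
    (hq : 1 < q) (hx : orderOf x = q ^ 2 - 1) : orderOf (x ^ (q - 1)) = q + 1 := by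
  have hfactor : q ^ 2 - 1 = (q + 1) * (q - 1) := by simpa only [one_pow] using Nat.sq_sub_sq q 1
  have hq1 : q - 1 ≠ 0 := Nat.sub_ne_zero_of_lt hq
  rw [orderOf_pow_of_dvd hq1 (hx ▸ hfactor ▸ Dvd.intro_left _ rfl), hx, hfactor,
    Nat.mul_div_cancel _ (Nat.pos_of_ne_zero hq1)]

end FiniteFields

section NormCodes

variable {F K ι : Type*} [Field F] [Field K] [Finite K] [Algebra F K] [CharP F 2]
  [Fintype ι] {z : ι → K}

theorem card_semilinearGroup_of_finrank_eq_two [Fintype F] {m : ℕ} (h : Module.finrank F K = 2)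
    (hF : Fintype.card F = 2 ^ m) :
    Nat.card (semilinearGroup F K) =
      m * (Fintype.card F ^ 2 - 1) * (Fintype.card F ^ 2 - Fintype.card F) := by
  rw [semilinearGroup.card_eq, natCard_linearEquiv_of_finrank_eq_two h, natCard_ringEquiv hF,
    mul_assoc]

theorem natCard_eq_two_or_five_le_card_add_one (F : Type*) [Field F] [Fintype F] [CharP F 2] :
    Nat.card F = 2 ∨ 5 ≤ Fintype.card F + 1 := by
  obtain ⟨n, -, hn⟩ := FiniteField.card F 2
  rw [Nat.card_eq_fintype_card, hn]
  rcases (Nat.one_le_iff_ne_zero.2 n.ne_zero).eq_or_lt with h1 | h1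
  · exact Or.inl (by rw [← h1, pow_one])
  · exact Or.inr (Nat.succ_le_succ (Nat.pow_le_pow_right two_pos h1))

theorem card_autMSet_graphCode_normForm [Fintype F] (h : Module.finrank F K = 2)
    (hinj : Function.Injective z) (hz : Set.range z = {x | Algebra.norm F x = 1}) :
    Nat.card (autMSet (graphCode F (normForm h) z : Set (ι → F))) =
      (Fintype.card F ^ 2 - 1) * (Fintype.card F ^ 2 - Fintype.card F) :=
  (card_autMSet_graphCode (isLineFamily_of_range_eq_setOf_norm_eq_one h hinj hz) h
    (normForm_polarBilin_separatingLeft h)).trans (natCard_linearEquiv_of_finrank_eq_two h)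

theorem dualSet_graphCode_normForm [Finite F] (h : Module.finrank F K = 2)
    (hz : ∀ j, Algebra.norm F (z j) = 1) :
    dualSet (graphCode F (normForm h) z : Set (ι → F)) =
      {w | ∃ (c : F) (δ : K), ∀ j, w j = c + Algebra.trace F K (δ * z j)} := by
  ext w
  rw [graphCode_eq_ker_of_forall_eq_one (Q := normForm h) hz, mem_dualSet_ker_linearCombination,
    exists_dual_prod_iff_exists_trace]
  simp only [normForm_apply, hz, mul_one, Algebra.trace_self_apply, Set.mem_ofPred_eq]

theorem dualSet_graphCode_zmod_two_normForm [Finite F] [Algebra (ZMod 2) F] [Algebra (ZMod 2) K]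
    [IsScalarTower (ZMod 2) F K] (h : Module.finrank F K = 2) (z : ι → K) :
    dualSet (graphCode (ZMod 2) (normForm h) z : Set (ι → ZMod 2)) =
      {w | ∃ (c : F) (δ : K), ∀ j, w j = Algebra.trace (ZMod 2) K (δ * z j) +
        Algebra.trace (ZMod 2) F (c * Algebra.norm F (z j))} := by
  ext w
  rw [graphCode_zmod_two_eq_ker, mem_dualSet_ker_linearCombination,
    exists_dual_prod_iff_exists_trace]
  simp only [normForm_apply, add_comm, Set.mem_ofPred_eq]

theorem hasSemilinearAut0_graphCode_normForm [Fintype F] (h : Module.finrank F K = 2)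
    (hι : Fintype.card ι = Fintype.card F + 1) (hinj : Function.Injective z)
    (hz : Set.range z = {x | Algebra.norm F x = 1}) :
    HasSemilinearAut0 (semilinearGroup F K) (graphCode F (normForm h) z : Set (ι → F)) :=
  hasSemilinearAut0_graphCode (isLineFamily_of_range_eq_setOf_norm_eq_one h hinj hz) h
    (normForm_polarBilin_separatingLeft h) (fun τ => ⟨τ, fun _ => rfl⟩) fun _ he =>
      map_add_of_mem_aut0Set_graphCode h (normForm_anisotropic h) hinj (fun j => hz.le ⟨j, rfl⟩)
        (hι ▸ natCard_eq_two_or_five_le_card_add_one F) he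

theorem hasSemilinearAut0_dualSet_graphCode_normForm [Fintype F] (h : Module.finrank F K = 2)
    (hι : Fintype.card ι = Fintype.card F + 1) (hinj : Function.Injective z)
    (hz : Set.range z = {x | Algebra.norm F x = 1}) :
    HasSemilinearAut0 (semilinearGroup F K)
      (dualSet (graphCode F (normForm h) z : Set (ι → F))) :=
  (hasSemilinearAut0_graphCode_normForm h hι hinj hz).dual fun _ he =>
    map_add_of_mem_aut0Set_dualSet_graphCode h (normForm_anisotropic h) hinj
      (fun j => hz.le ⟨j, rfl⟩) (hι ▸ natCard_eq_two_or_five_le_card_add_one F) he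

variable [Algebra (ZMod 2) F] [Algebra (ZMod 2) K] [IsScalarTower (ZMod 2) F K]

theorem hasSemilinearAut0_graphCode_zmod_two_normForm [Finite F] (h : Module.finrank F K = 2)
    (hinj : Function.Injective z) (hz : Set.range z = {0}ᶜ) :
    HasSemilinearAut0 (semilinearGroup F K)
      (graphCode (ZMod 2) (normForm h) z : Set (ι → ZMod 2)) :=
  hasSemilinearAut0_graphCode (isLineFamily_zmod_two hinj hz) h
    (normForm_polarBilin_separatingLeft h)
    (fun τ => ⟨RingEquiv.refl _, fun r => (τ.toRingHom.comp (algebraMap _ F)).congr_fun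
      (Subsingleton.elim _ (algebraMap _ F)) r⟩)
    fun _ he => map_add_of_mem_aut0Set_of_card_eq_two (Nat.card_zmod 2) he

theorem hasSemilinearAut0_dualSet_graphCode_zmod_two_normForm [Finite F]
    (h : Module.finrank F K = 2) (hinj : Function.Injective z) (hz : Set.range z = {0}ᶜ) :
    HasSemilinearAut0 (semilinearGroup F K)
      (dualSet (graphCode (ZMod 2) (normForm h) z : Set (ι → ZMod 2))) :=
  (hasSemilinearAut0_graphCode_zmod_two_normForm h hinj hz).dual fun _ he =>
    map_add_of_mem_aut0Set_of_card_eq_two (Nat.card_zmod 2) he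

end NormCodes

/-- Let `m ≥ 1`, `q = 2^m`.  For each of the codes `M_q^⊥`, `M_q`, `K_q`,
`K_q^⊥`, every zero-fixing automorphism is semilinear, and the groups `Aut0(M_q^⊥)`,
`Aut0(M_q)`, `Aut0(K_q)`, `Aut0(K_q^⊥)` are pairwise isomorphic, each of order
`m·(q²−1)·(q²−q)` (the order of `ΓL(2,q)`).  Moreover `AutM(M_q^⊥)` and `AutM(M_q)` each
have order `(q²−1)·(q²−q)` (the order of `GL(2,q)`). -/
theorem stmt_13 (m q : ℕ) (hm : 1 ≤ m) (hq : q = 2 ^ m)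
    (F K : Type) [Field F] [Field K] [Fintype F] [Fintype K]
    [Algebra (ZMod 2) F] [Algebra (ZMod 2) K] [Algebra F K] [IsScalarTower (ZMod 2) F K]
    (hcF : Fintype.card F = q) (hcK : Fintype.card K = q ^ 2)
    (α : K) (hα : orderOf α = q ^ 2 - 1)
    (ζ : K) (hζ : ζ = α ^ (q - 1))
    (θ : F) (hθ : algebraMap F K θ = α ^ (q + 1))
    (Mdual : Set (Fin (q + 1) → F))
    (hM : Mdual = {w | ∃ (c : F) (δ : K), ∀ j : Fin (q + 1),
        w j = c + Algebra.trace F K (δ * ζ ^ ((j : ℕ) + 1))})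
    (Kdual : Set (Fin (q ^ 2 - 1) → ZMod 2))
    (hK : Kdual = {w | ∃ (c : F) (δ : K), ∀ l : Fin (q ^ 2 - 1),
        w l = Algebra.trace (ZMod 2) K (δ * α ^ ((l : ℕ) + 1))
            + Algebra.trace (ZMod 2) F (c * θ ^ ((l : ℕ) + 1))}) :
    (aut0Set Mdual = autSSet Mdual ∧
     aut0Set (dualSet Mdual) = autSSet (dualSet Mdual) ∧
     aut0Set Kdual = autSSet Kdual ∧
     aut0Set (dualSet Kdual) = autSSet (dualSet Kdual)) ∧
    (MulBijOn (aut0Set Mdual) (aut0Set (dualSet Mdual)) ∧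
     MulBijOn (aut0Set Mdual) (aut0Set Kdual) ∧
     MulBijOn (aut0Set Mdual) (aut0Set (dualSet Kdual)) ∧
     MulBijOn (aut0Set (dualSet Mdual)) (aut0Set Kdual) ∧
     MulBijOn (aut0Set (dualSet Mdual)) (aut0Set (dualSet Kdual)) ∧
     MulBijOn (aut0Set Kdual) (aut0Set (dualSet Kdual))) ∧
    (Nat.card (aut0Set Mdual) = m * (q ^ 2 - 1) * (q ^ 2 - q) ∧
     Nat.card (aut0Set (dualSet Mdual)) = m * (q ^ 2 - 1) * (q ^ 2 - q) ∧
     Nat.card (aut0Set Kdual) = m * (q ^ 2 - 1) * (q ^ 2 - q) ∧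
     Nat.card (aut0Set (dualSet Kdual)) = m * (q ^ 2 - 1) * (q ^ 2 - q)) ∧
    (Nat.card (autMSet Mdual) = (q ^ 2 - 1) * (q ^ 2 - q) ∧
     Nat.card (autMSet (dualSet Mdual)) = (q ^ 2 - 1) * (q ^ 2 - q)) := by
  have : CharP F 2 := charP_of_injective_algebraMap (algebraMap (ZMod 2) F).injective 2
  subst hcF
  have h : Module.finrank F K = 2 := finrank_eq_two_of_card_eq_sq hcK
  have hζ' : orderOf ζ = Fintype.card F + 1 :=
    hζ ▸ orderOf_pow_sub_one_of_orderOf_eq_sq_sub_one Fintype.one_lt_card hα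
  have hθ' : θ = Algebra.norm F α := (algebraMap F K).injective
    (hθ.trans (algebraMap_norm_eq_pow_card_add_one h α).symm)
  have hζinj := injective_pow_succ_of_orderOf_eq hζ'
  have hζrange := range_pow_succ_eq_setOf_norm_eq_one h rfl hζ'
  have hαinj := injective_pow_succ_of_orderOf_eq hα
  have hαrange := range_pow_succ_eq_compl_zero (by rw [hcK]) hα
  have hcard := card_semilinearGroup_of_finrank_eq_two h hq
  have hM₁ := hasSemilinearAut0_graphCode_normForm h (Fintype.card_fin _) hζinj hζrange
  have hM₂ := hasSemilinearAut0_dualSet_graphCode_normForm h (Fintype.card_fin _) hζinj hζrange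
  have hK₁ := hasSemilinearAut0_graphCode_zmod_two_normForm h hαinj hαrange
  have hK₂ := hasSemilinearAut0_dualSet_graphCode_zmod_two_normForm h hαinj hαrange
  have hM₃ := card_autMSet_graphCode_normForm h hζinj hζrange
  simp only [hθ', ← map_pow, ← dualSet_graphCode_zmod_two_normForm h] at hK
  rw [← dualSet_graphCode_normForm h fun j => hζrange.le ⟨j, rfl⟩] at hM
  rw [hM, hK, dualSet_dualSet, dualSet_dualSet]
  exact ⟨⟨hM₂.1, hM₁.1, hK₂.1, hK₁.1⟩, ⟨hM₂.mulBijOn hM₁, hM₂.mulBijOn hK₂, hM₂.mulBijOn hK₁,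
    hM₁.mulBijOn hK₂, hM₁.mulBijOn hK₁, hK₂.mulBijOn hK₁⟩, ⟨hM₂.card_eq.trans hcard,
    hM₁.card_eq.trans hcard, hK₂.card_eq.trans hcard, hK₁.card_eq.trans hcard⟩,
    card_autMSet_dualSet.trans hM₃, hM₃⟩
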